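/- arXiv:2410.15852 — 8 statements merged into one kernel-verified Lean document; each statement's English description precedes it below -/
import Mathlib

section
/- For every integer n > 0, d1(n) + d1(n-1) = ped(n). -/
/-- No even part is repeated (all even parts are distinct). -/
def EvenDistinct {n : ℕ} (p : n.Partition) : Prop :=
  ∀ i, Even i → p.parts.count i ≤ 1

/-- No odd part is repeated (all odd parts are distinct). -/
def OddDistinct {n : ℕ} (p : n.Partition) : Prop :=
  ∀ i, Odd i → p.parts.count i ≤ 1

/-- The largest part of a partition (0 for the empty partition of 0). -/
def maxPart {n : ℕ} (p : n.Partition) : ℕ := p.parts.sup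

/-- Number of partitions of n with no even part repeated. -/
noncomputable def ped (n : ℕ) : ℕ := Nat.card {p : n.Partition // EvenDistinct p}

/-- Number of partitions of n with no even part repeated and largest part odd. -/
noncomputable def d1 (n : ℕ) : ℕ :=
  Nat.card {p : n.Partition // EvenDistinct p ∧ p.parts ≠ 0 ∧ Odd (maxPart p)}

theorem ms_decomp (s : Multiset ℕ) (h : s ≠ 0) :
    ∃ a t, s = a ::ₘ t ∧ ∀ x ∈ t, x ≤ a := by
  induction s using Multiset.induction_on with
  | empty => exact absurd rfl h
  | cons b s ih =>
    by_cases hs : s = 0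
    · exact ⟨b, 0, by rw [hs], by simp⟩
    · obtain ⟨a, t, rfl, ht⟩ := ih hs
      by_cases hab : a ≤ b
      · refine ⟨b, a ::ₘ t, rfl, ?_⟩
        intro x hx
        rcases Multiset.mem_cons.1 hx with rfl | hx
        · exact hab
        · exact (ht x hx).trans hab
      · refine ⟨a, b ::ₘ t, Multiset.cons_swap _ _ _, ?_⟩
        intro x hx
        rcases Multiset.mem_cons.1 hx with rfl | hx
        · omega
        · exact ht x hx

theorem ms_sup (a : ℕ) (t : Multiset ℕ) (h : ∀ x ∈ t, x ≤ a) : (a ::ₘ t).sup = a := by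
  rw [Multiset.sup_cons]
  exact sup_eq_left.2 (Multiset.sup_le.2 h)

/-- decrease the maximum -/
def msDown (s : Multiset ℕ) : Multiset ℕ := (s.sup - 1) ::ₘ s.erase s.sup

/-- increase the maximum -/
def msUp (s : Multiset ℕ) : Multiset ℕ := (s.sup + 1) ::ₘ s.erase s.sup

theorem msDown_cons (a : ℕ) (t : Multiset ℕ) (h : ∀ x ∈ t, x ≤ a) :
    msDown (a ::ₘ t) = (a - 1) ::ₘ t := by
  simp only [msDown, ms_sup a t h, Multiset.erase_cons_head]

theorem msUp_cons (a : ℕ) (t : Multiset ℕ) (h : ∀ x ∈ t, x ≤ a) :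
    msUp (a ::ₘ t) = (a + 1) ::ₘ t := by
  simp only [msUp, ms_sup a t h, Multiset.erase_cons_head]

/-- valid multisets -/
def msEv (s : Multiset ℕ) (n : ℕ) : Prop :=
  (∀ i ∈ s, 0 < i) ∧ s.sum = n ∧ (∀ i, Even i → s.count i ≤ 1)

theorem ms_down_ok (s : Multiset ℕ) (m : ℕ) (h : msEv s (m + 1)) (he : ¬ Odd s.sup) :
    msEv (msDown s) m ∧ msDown s ≠ 0 ∧ Odd (msDown s).sup ∧ msUp (msDown s) = s := by
  obtain ⟨hp, hs, hc⟩ := h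
  have h0 : s ≠ 0 := by rintro rfl; simp at hs
  obtain ⟨a, t, rfl, ht⟩ := ms_decomp s h0
  rw [ms_sup a t ht, Nat.not_odd_iff_even] at he
  have ha : 0 < a := hp a (by simp)
  have ht' : ∀ x ∈ t, x ≤ a - 1 := by
    intro x hx
    have h1 := ht x hx
    have h2 : x ≠ a := by
      rintro rfl
      have := hc x he
      rw [Multiset.count_cons_self] at this
      have := Multiset.count_pos.2 hx
      omega
    omega
  have ho : Odd (a - 1) := by
    obtain ⟨k, hk⟩ := he
    exact ⟨k - 1, by omega⟩
  rw [msDown_cons a t ht, ms_sup _ t ht', msUp_cons _ t ht', Nat.sub_add_cancel ha]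
  refine ⟨⟨?_, ?_, ?_⟩, Multiset.cons_ne_zero, ho, rfl⟩
  · intro i hi
    rcases Multiset.mem_cons.1 hi with rfl | hi
    · exact ho.pos
    · exact hp i (Multiset.mem_cons_of_mem hi)
  · simp only [Multiset.sum_cons] at hs ⊢
    omega
  · intro i hi
    have h1 : i ≠ a - 1 := by
      rintro rfl
      exact (Nat.not_even_iff_odd.2 ho) hi
    rw [Multiset.count_cons_of_ne h1]
    exact (Multiset.count_le_count_cons i a t).trans (hc i hi)

theorem ms_up_ok (s : Multiset ℕ) (m : ℕ) (h : msEv s m) (h0 : s ≠ 0) (ho : Odd s.sup) :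
    msEv (msUp s) (m + 1) ∧ ¬ Odd (msUp s).sup ∧ msDown (msUp s) = s := by
  obtain ⟨hp, hs, hc⟩ := h
  obtain ⟨a, t, rfl, ht⟩ := ms_decomp s h0
  rw [ms_sup a t ht] at ho
  have ht' : ∀ x ∈ t, x ≤ a + 1 := fun x hx => (ht x hx).trans (Nat.le_succ a)
  rw [msUp_cons a t ht, ms_sup _ t ht', msDown_cons _ t ht', Nat.add_sub_cancel]
  refine ⟨⟨?_, ?_, ?_⟩, by rw [Nat.not_odd_iff_even]; exact ho.add_one, rfl⟩
  · intro i hi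
    rcases Multiset.mem_cons.1 hi with rfl | hi
    · omega
    · exact hp i (Multiset.mem_cons_of_mem hi)
  · simp only [Multiset.sum_cons] at hs ⊢
    omega
  · intro i hi
    by_cases h1 : i = a + 1
    · subst h1
      rw [Multiset.count_cons_self, Multiset.count_eq_zero_of_notMem]
      intro hx
      have := ht _ hx
      omega
    · rw [Multiset.count_cons_of_ne h1]
      exact (Multiset.count_le_count_cons i a t).trans (hc i hi)

theorem msEv_of {n : ℕ} (p : n.Partition) (h : EvenDistinct p) : msEv p.parts n :=
  ⟨fun _ hi => p.parts_pos hi, p.parts_sum, h⟩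

/-- the bijection -/
def msEquiv (m : ℕ) :
    {p : m.Partition // EvenDistinct p ∧ p.parts ≠ 0 ∧ Odd (maxPart p)} ≃
    {p : (m + 1).Partition // EvenDistinct p ∧ ¬ Odd (maxPart p)} where
  toFun p :=
    have h := ms_up_ok p.1.parts m (msEv_of p.1 p.2.1) p.2.2.1 p.2.2.2
    ⟨⟨msUp p.1.parts, fun {i} hi => h.1.1 i hi, h.1.2.1⟩, h.1.2.2, h.2.1⟩
  invFun p :=
    have h := ms_down_ok p.1.parts m (msEv_of p.1 p.2.1) p.2.2
    ⟨⟨msDown p.1.parts, fun {i} hi => h.1.1 i hi, h.1.2.1⟩, h.1.2.2, h.2.1, h.2.2.1⟩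
  left_inv p := Subtype.ext (Nat.Partition.ext
    (ms_up_ok p.1.parts m (msEv_of p.1 p.2.1) p.2.2.1 p.2.2.2).2.2)
  right_inv p := Subtype.ext (Nat.Partition.ext
    (ms_down_ok p.1.parts m (msEv_of p.1 p.2.1) p.2.2).2.2.2)

theorem d1_add_d1_eq_ped : ∀ n : ℕ, 0 < n → d1 n + d1 (n - 1) = ped n := by
  classical
  intro n hn
  obtain ⟨m, rfl⟩ : ∃ m, n = m + 1 := ⟨n - 1, by omega⟩
  rw [Nat.add_sub_cancel]
  unfold d1 ped
  rw [Nat.card_congr (msEquiv m)]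
  simp only [Nat.card_eq_fintype_card, Fintype.card_subtype]
  rw [← Finset.card_filter_add_card_filter_not (s := Finset.univ.filter
    (fun p : (m + 1).Partition => EvenDistinct p)) (fun p => Odd (maxPart p))]
  rw [Finset.filter_filter, Finset.filter_filter]
  congr 2
  ext p
  have : p.parts ≠ 0 := by
    intro h
    have := p.parts_sum
    rw [h] at this
    simp at this
  simp [this]
end

section
/- For every integer n > 0, d2(n) + d2(n-3) = ped_{>1}(n), where d2(m) = 0 for m ≤ 0. -/
/-- Number of partitions of n with no even part repeated and every part > 1. -/
noncomputable def pedGtOne (n : ℕ) : ℕ :=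
  Nat.card {p : n.Partition // EvenDistinct p ∧ ∀ i ∈ p.parts, 1 < i}

/-- Number of partitions of n with no even part repeated, largest part odd,
and the largest part appearing at least twice. -/
noncomputable def d2 (n : ℕ) : ℕ :=
  Nat.card {p : n.Partition // EvenDistinct p ∧ Odd (maxPart p) ∧
    2 ≤ p.parts.count (maxPart p)}

open Classical in
noncomputable def TT (n : ℕ) : Finset (Multiset ℕ) :=
  (Finset.univ : Finset n.Partition).image Nat.Partition.parts

theorem mem_TT {n : ℕ} {s : Multiset ℕ} : s ∈ TT n ↔ (∀ i ∈ s, 0 < i) ∧ s.sum = n := by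
  unfold TT
  simp only [Finset.mem_image, Finset.mem_univ, true_and]
  constructor
  · rintro ⟨p, rfl⟩
    exact ⟨fun i hi => p.parts_pos hi, p.parts_sum⟩
  · rintro ⟨h, h'⟩
    exact ⟨⟨s, fun {i} hi => h i hi, h'⟩, rfl⟩

def EE (s : Multiset ℕ) : Prop := ∀ i, Even i → s.count i ≤ 1

open Classical in
noncomputable def cnt (n : ℕ) (p : Multiset ℕ → Prop) : ℕ := ((TT n).filter p).card

theorem cnt_congr {n : ℕ} {p q : Multiset ℕ → Prop}
    (h : ∀ s, (∀ i ∈ s, 0 < i) → s.sum = n → (p s ↔ q s)) : cnt n p = cnt n q := by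
  classical
  unfold cnt
  congr 1
  apply Finset.filter_congr
  intro s hs
  rw [mem_TT] at hs
  exact h s hs.1 hs.2

theorem card_partition (n : ℕ) (p : Multiset ℕ → Prop) :
    Nat.card {q : n.Partition // p q.parts} = cnt n p := by
  classical
  rw [Nat.card_eq_fintype_card, Fintype.card_subtype]
  unfold cnt TT
  rw [Finset.filter_image, Finset.card_image_of_injective]
  intro a b h
  exact Nat.Partition.ext h

theorem cnt_split (n : ℕ) (p q : Multiset ℕ → Prop) :
    cnt n p = cnt n (fun s => p s ∧ q s) + cnt n (fun s => p s ∧ ¬ q s) := by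
  classical
  unfold cnt
  rw [← Finset.card_filter_add_card_filter_not (s := (TT n).filter p) q,
    Finset.filter_filter, Finset.filter_filter]
  congr 2 <;> ext s <;> simp

theorem cnt_rem (n : ℕ) (p : Multiset ℕ → Prop) (t : Multiset ℕ) (ht : ∀ i ∈ t, 0 < i) :
    cnt n (fun s => p s ∧ t ≤ s) =
      if t.sum ≤ n then cnt (n - t.sum) (fun s => p (t + s)) else 0 := by
  classical
  split_ifs with h
  · unfold cnt
    symm
    apply Finset.card_bij (fun s _ => t + s)
    · intro s hs
      simp only [Finset.mem_filter, mem_TT] at hs ⊢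
      refine ⟨⟨?_, ?_⟩, hs.2, Multiset.le_add_right _ _⟩
      · intro i hi
        rcases Multiset.mem_add.1 hi with hi | hi
        · exact ht i hi
        · exact hs.1.1 i hi
      · rw [Multiset.sum_add, hs.1.2]; omega
    · intro a _ b _ hab
      exact add_left_cancel hab
    · intro s hs
      simp only [Finset.mem_filter, mem_TT] at hs
      obtain ⟨⟨h0, h1⟩, h2, h3⟩ := hs
      obtain ⟨u, rfl⟩ := Multiset.le_iff_exists_add.1 h3
      refine ⟨u, ?_, rfl⟩
      simp only [Finset.mem_filter, mem_TT]
      refine ⟨⟨fun i hi => h0 i (Multiset.mem_add.2 (Or.inr hi)), ?_⟩, h2⟩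
      rw [Multiset.sum_add] at h1; omega
  · unfold cnt
    rw [Finset.card_eq_zero]
    apply Finset.eq_empty_of_forall_notMem
    intro s hs
    simp only [Finset.mem_filter, mem_TT] at hs
    obtain ⟨hs, _, h3⟩ := hs
    obtain ⟨u, rfl⟩ := Multiset.le_iff_exists_add.1 h3
    have := hs.2
    rw [Multiset.sum_add] at this; omega

noncomputable def AA (m n : ℕ) : ℕ := cnt n (fun s => EE s ∧ ∀ i ∈ s, i ≤ m)

theorem cnt_rem1 (n : ℕ) (p : Multiset ℕ → Prop) (a : ℕ) (ha : 0 < a) :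
    cnt n (fun s => p s ∧ a ∈ s) =
      if a ≤ n then cnt (n - a) (fun s => p (a ::ₘ s)) else 0 := by
  have := cnt_rem n p {a} (by simpa using ha)
  simpa using this

theorem EE_cons_odd {a : ℕ} (ha : Odd a) (s : Multiset ℕ) : EE (a ::ₘ s) ↔ EE s := by
  unfold EE
  refine forall_congr' fun i => forall_congr' fun hi => ?_
  have : i ≠ a := by rintro rfl; exact (Nat.not_even_iff_odd.2 ha) hi
  rw [Multiset.count_cons_of_ne this]

theorem EE_cons_even {a : ℕ} (ha : Even a) (s : Multiset ℕ) :
    EE (a ::ₘ s) ↔ EE s ∧ a ∉ s := by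
  unfold EE
  constructor
  · intro h
    refine ⟨fun i hi => (Multiset.count_le_of_le i (Multiset.le_cons_self s a)).trans (h i hi), ?_⟩
    have := h a ha
    rw [Multiset.count_cons_self] at this
    rw [← Multiset.count_eq_zero]; omega
  · rintro ⟨h, h'⟩ i hi
    rw [Multiset.count_cons]
    split_ifs with hia
    · subst hia
      rw [Multiset.count_eq_zero.2 h']
    · exact h i hi

theorem AA_succ_aux (m n : ℕ) : AA (m+1) n =
    (if m + 1 ≤ n then cnt (n - (m+1))
      (fun s => EE ((m+1) ::ₘ s) ∧ ∀ i ∈ (m+1) ::ₘ s, i ≤ m+1) else 0) + AA m n := by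
  unfold AA
  rw [cnt_split n _ (fun s => m+1 ∈ s), cnt_rem1 n _ (m+1) (Nat.succ_pos _)]
  congr 1
  apply cnt_congr
  intro s _ _
  constructor
  · rintro ⟨⟨h1, h2⟩, h3⟩
    refine ⟨h1, fun i hi => ?_⟩
    have := h2 i hi
    have : i ≠ m+1 := by rintro rfl; exact h3 hi
    omega
  · rintro ⟨h1, h2⟩
    refine ⟨⟨h1, fun i hi => (h2 i hi).trans (Nat.le_succ _)⟩, fun h => ?_⟩
    have := h2 _ h
    omega

theorem AA_odd (m n : ℕ) (h : Odd (m+1)) : AA (m+1) n =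
    (if m + 1 ≤ n then AA (m+1) (n - (m+1)) else 0) + AA m n := by
  rw [AA_succ_aux]
  congr 2
  apply cnt_congr
  intro s _ _
  rw [EE_cons_odd h]
  simp

theorem AA_even (m n : ℕ) (h : Even (m+1)) : AA (m+1) n =
    (if m + 1 ≤ n then AA m (n - (m+1)) else 0) + AA m n := by
  rw [AA_succ_aux]
  congr 2
  apply cnt_congr
  intro s _ _
  rw [EE_cons_even h]
  constructor
  · rintro ⟨⟨h1, h2⟩, h3⟩
    refine ⟨h1, fun i hi => ?_⟩
    have := h3 i (Multiset.mem_cons_of_mem hi)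
    have : i ≠ m+1 := by rintro rfl; exact h2 hi
    omega
  · rintro ⟨h1, h2⟩
    refine ⟨⟨h1, fun h => ?_⟩, fun i hi => ?_⟩
    · have := h2 _ h
      omega
    · rcases Multiset.mem_cons.1 hi with rfl | hi
      · exact le_rfl
      · exact (h2 i hi).trans (Nat.le_succ _)

theorem AA_zero (n : ℕ) : AA 0 n = if n = 0 then 1 else 0 := by
  classical
  unfold AA cnt
  split_ifs with h
  · subst h
    rw [Finset.card_eq_one]
    refine ⟨0, ?_⟩
    ext s
    simp only [Finset.mem_filter, mem_TT, Finset.mem_singleton]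
    constructor
    · rintro ⟨⟨h1, _⟩, _, h2⟩
      apply Multiset.eq_zero_of_forall_notMem
      intro i hi
      have := h1 i hi
      have := h2 i hi
      omega
    · rintro rfl
      simp [EE]
  · rw [Finset.card_eq_zero]
    apply Finset.eq_empty_of_forall_notMem
    intro s hs
    simp only [Finset.mem_filter, mem_TT] at hs
    obtain ⟨hs, _, h2⟩ := hs
    have : s = 0 := by
      apply Multiset.eq_zero_of_forall_notMem
      intro i hi
      have := hs.1 i hi
      have := h2 i hi
      omega
    subst this
    exact h (by simpa using hs.2.symm)

theorem ped_eq (m n : ℕ) (h : n ≤ m) :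
    AA m n = (if 1 ≤ n then AA m (n-1) else 0) + pedGtOne n := by
  have hp : pedGtOne n = cnt n (fun s => EE s ∧ ∀ i ∈ s, 1 < i) :=
    card_partition n (fun s => EE s ∧ ∀ i ∈ s, 1 < i)
  rw [hp]
  unfold AA
  rw [cnt_split n _ (fun s => 1 ∈ s), cnt_rem1 n _ 1 Nat.one_pos]
  have key : ∀ s : Multiset ℕ, s.sum ≤ m → ∀ i ∈ s, i ≤ m := fun s hs i hi =>
    (Multiset.le_sum_of_mem hi).trans hs
  congr 1
  · split_ifs with h1
    · apply cnt_congr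
      intro s _ hs
      rw [EE_cons_odd odd_one]
      simp
      intro _ _
      omega
    · rfl
  · apply cnt_congr
    intro s h0 hs
    constructor
    · rintro ⟨⟨h1, h2⟩, h3⟩
      refine ⟨h1, fun i hi => ?_⟩
      have := h0 i hi
      have : i ≠ 1 := by rintro rfl; exact h3 hi
      omega
    · rintro ⟨h1, h2⟩
      exact ⟨⟨h1, key s (by omega)⟩, fun h => by have := h2 _ h; omega⟩

theorem d2_eq (K n : ℕ) (h : n ≤ K) : d2 n =
    ∑ j ∈ Finset.range (K+1), if 4*j+2 ≤ n then AA (2*j+1) (n - (4*j+2)) else 0 := by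
  classical
  have hp : d2 n = cnt n (fun s => EE s ∧ Odd s.sup ∧ 2 ≤ s.count s.sup) :=
    card_partition n (fun s => EE s ∧ Odd s.sup ∧ 2 ≤ s.count s.sup)
  rw [hp]
  have hf : cnt n (fun s => EE s ∧ Odd s.sup ∧ 2 ≤ s.count s.sup) =
      ∑ j ∈ Finset.range (K+1), cnt n (fun s => (EE s ∧ ∀ i ∈ s, i ≤ 2*j+1) ∧
        Multiset.replicate 2 (2*j+1) ≤ s) := by
    unfold cnt
    rw [Finset.card_eq_sum_card_fiberwise (f := fun s : Multiset ℕ => s.sup / 2)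
      (t := Finset.range (K+1))]
    · apply Finset.sum_congr rfl
      intro j _
      rw [Finset.filter_filter]
      congr 1
      ext s
      simp only [Finset.mem_filter]
      refine and_congr_right fun _ => ?_
      rw [← Multiset.le_count_iff_replicate_le]
      constructor
      · rintro ⟨⟨h1, ⟨k, hk⟩, h3⟩, h4⟩
        have : s.sup = 2*j+1 := by omega
        rw [this] at h3
        exact ⟨⟨h1, fun i hi => (Multiset.le_sup hi).trans this.le⟩, h3⟩
      · rintro ⟨⟨h1, h2⟩, h3⟩
        have hm : 2*j+1 ∈ s := Multiset.count_pos.1 (by omega)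
        have : s.sup = 2*j+1 := le_antisymm (Multiset.sup_le.2 h2) (Multiset.le_sup hm)
        rw [this]
        exact ⟨⟨h1, ⟨j, rfl⟩, h3⟩, by omega⟩
    · intro s hs
      simp only [Finset.coe_filter, Set.mem_ofPred_eq, mem_TT] at hs
      have : s.sup ≤ n := Multiset.sup_le.2 fun i hi => (Multiset.le_sum_of_mem hi).trans hs.1.2.le
      simp only [Finset.coe_range, Set.mem_Iio]
      omega
  rw [hf]
  apply Finset.sum_congr rfl
  intro j _
  rw [cnt_rem n _ _ (by intro i hi; rw [Multiset.eq_of_mem_replicate hi]; omega)]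
  have e : (Multiset.replicate 2 (2*j+1)).sum = 4*j+2 := by
    simp; ring
  rw [e]
  refine if_congr Iff.rfl ?_ rfl
  unfold AA
  apply cnt_congr
  intro s _ _
  have e2 : Multiset.replicate 2 (2*j+1) + s = (2*j+1) ::ₘ (2*j+1) ::ₘ s := by
    simp [Multiset.replicate_succ]
  rw [e2, EE_cons_odd ⟨j, rfl⟩, EE_cons_odd ⟨j, rfl⟩]
  simp

open PowerSeries in
noncomputable def PP (m : ℕ) : PowerSeries ℤ := PowerSeries.mk fun n => (AA m n : ℤ)

open PowerSeries in
theorem PP_zero : PP 0 = 1 := by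
  ext n
  simp [PP, AA_zero, coeff_one]

open PowerSeries in
theorem PP_odd (m : ℕ) (h : Odd (m+1)) : PP (m+1) = X^(m+1) * PP (m+1) + PP m := by
  ext n
  rw [map_add, coeff_X_pow_mul']
  simp only [PP, coeff_mk]
  rw [AA_odd m n h]
  push_cast
  rfl

open PowerSeries in
theorem PP_even (m : ℕ) (h : Even (m+1)) : PP (m+1) = X^(m+1) * PP m + PP m := by
  ext n
  rw [map_add, coeff_X_pow_mul']
  simp only [PP, coeff_mk]
  rw [AA_even m n h]
  push_cast
  rfl

open PowerSeries in
theorem telescope (k : ℕ) :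
    1 + (1 + X^3) * ∑ j ∈ Finset.range (k+1), X^(4*j+2) * PP (2*j+1) =
      PP (2*k+1) * (1 - X + X^(2*k+2) + X^(4*k+5)) := by
  induction k with
  | zero =>
    have h := PP_odd 0 (by decide)
    rw [PP_zero] at h
    simp only [zero_add, Finset.sum_range_one, mul_zero]
    simp only [zero_add] at h
    linear_combination (-1 : PowerSeries ℤ) * h
  | succ k ih =>
    rw [Finset.sum_range_succ, mul_add, ← add_assoc, ih]
    have h1 := PP_odd (2*k+2) ⟨k+1, by ring⟩
    have h2 := PP_even (2*k+1) ⟨k+1, by ring⟩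
    have e : 2*(k+1)+1 = 2*k+2+1 := by ring
    rw [e]
    rw [show 2*k+1+1 = 2*k+2 by ring] at h2
    rw [h2] at h1
    linear_combination (-(1 - X + X * X^(2*k+2)) : PowerSeries ℤ) * h1

open PowerSeries in
theorem d2_add_d2_eq_pedGtOne : ∀ n : ℕ, 0 < n → d2 n + d2 (n - 3) = pedGtOne n := by
  intro n hn
  have hc : ∀ i ≤ n, coeff i (∑ j ∈ Finset.range (n+1), X^(4*j+2) * PP (2*j+1)) = (d2 i : ℤ) := by
    intro i hi
    rw [d2_eq n i hi, map_sum]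
    push_cast
    apply Finset.sum_congr rfl
    intro j _
    rw [coeff_X_pow_mul']
    simp [PP]
  have h0 : d2 0 = 0 := by
    rw [d2_eq 0 0 le_rfl]; simp
  have ht := congrArg (coeff n) (telescope n)
  have e : PP (2*n+1) * (1 - X + X^(2*n+2) + X^(4*n+5)) =
    PP (2*n+1) - X^1 * PP (2*n+1) + X^(2*n+2) * PP (2*n+1) + X^(4*n+5) * PP (2*n+1) := by ring
  rw [e, add_mul, one_mul] at ht
  simp only [map_add, map_sub, coeff_X_pow_mul', coeff_one] at ht
  rw [hc n le_rfl, hc (n-3) (by omega), if_neg (by omega), if_pos (show 1 ≤ n from hn),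
    if_neg (show ¬ 2*n+2 ≤ n by omega), if_neg (show ¬ 4*n+5 ≤ n by omega)] at ht
  simp only [PP, coeff_mk] at ht
  have hped := ped_eq (2*n+1) n (by omega)
  rw [if_pos (show 1 ≤ n from hn)] at hped
  split_ifs at ht with h3
  · omega
  · rw [show n - 3 = 0 by omega, h0]
    omega
end

section
/- For every integer n > 0, d3(n+2) + d3(n-1) = ped(n). -/
/-- Number of partitions of n with no even part repeated, largest part odd,
and the largest part appearing exactly once. -/
noncomputable def d3 (n : ℕ) : ℕ :=
  Nat.card {p : n.Partition // EvenDistinct p ∧ Odd (maxPart p) ∧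
    p.parts.count (maxPart p) = 1}

def EDm (s : Multiset ℕ) : Prop := ∀ i, Even i → s.count i ≤ 1

def Pset (n : ℕ) : Set (Multiset ℕ) := {s | (∀ i ∈ s, 0 < i) ∧ s.sum = n ∧ EDm s}

def Dset (n : ℕ) : Set (Multiset ℕ) :=
  {s | s ∈ Pset n ∧ Odd s.sup ∧ s.count s.sup = 1}

def Tset (n : ℕ) : Set (ℕ × Multiset ℕ) :=
  {x | (∀ i ∈ x.2, 0 < i ∧ i ≤ 2 * x.1) ∧ 2 * x.1 + 1 + x.2.sum = n ∧ EDm x.2}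

theorem parts_inj {n : ℕ} : Function.Injective (fun p : n.Partition => p.parts) :=
  fun _ _ h => Nat.Partition.ext h

theorem ped_eq_s2 (n : ℕ) : ped n = (Pset n).ncard := by
  have : Pset n = (fun p : n.Partition => p.parts) '' {p | EvenDistinct p} := by
    ext s
    constructor
    · rintro ⟨h1, h2, h3⟩
      exact ⟨⟨s, fun {i} h => h1 i h, h2⟩, h3, rfl⟩
    · rintro ⟨p, hp, rfl⟩
      exact ⟨fun i h => p.parts_pos h, p.parts_sum, hp⟩
  rw [this, Set.ncard_image_of_injective _ parts_inj]
  rfl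

theorem d3_eq (n : ℕ) : d3 n = (Dset n).ncard := by
  have : Dset n = (fun p : n.Partition => p.parts) '' {p | EvenDistinct p ∧ Odd (maxPart p) ∧
    p.parts.count (maxPart p) = 1} := by
    ext s
    constructor
    · rintro ⟨⟨h1, h2, h3⟩, h4⟩
      exact ⟨⟨s, fun {i} h => h1 i h, h2⟩, ⟨h3, h4⟩, rfl⟩
    · rintro ⟨p, hp, rfl⟩
      exact ⟨⟨fun i h => p.parts_pos h, p.parts_sum, hp.1⟩, hp.2⟩
  rw [this, Set.ncard_image_of_injective _ parts_inj]
  rfl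

theorem Pset_finite (n : ℕ) : (Pset n).Finite := by
  have : Pset n ⊆ Set.range (fun p : n.Partition => p.parts) := by
    rintro s ⟨h1, h2, h3⟩
    exact ⟨⟨s, fun {i} h => h1 i h, h2⟩, rfl⟩
  exact (Set.finite_range _).subset this

theorem EDm_cons_odd {a : ℕ} {t : Multiset ℕ} (ha : Odd a) (ht : EDm t) : EDm (a ::ₘ t) := by
  intro i hi
  have : i ≠ a := by rintro rfl; exact (Nat.not_even_iff_odd.2 ha) hi
  rw [Multiset.count_cons_of_ne this]
  exact ht i hi

theorem EDm_cons_notMem {a : ℕ} {t : Multiset ℕ} (ha : a ∉ t) (ht : EDm t) : EDm (a ::ₘ t) := by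
  intro i hi
  by_cases h : i = a
  · subst h
    rw [Multiset.count_cons_self, Multiset.count_eq_zero_of_notMem ha]
  · rw [Multiset.count_cons_of_ne h]
    exact ht i hi

theorem EDm_of_cons {a : ℕ} {t : Multiset ℕ} (ht : EDm (a ::ₘ t)) : EDm t := fun i hi =>
  (Multiset.count_le_of_le i (Multiset.le_cons_self t a)).trans (ht i hi)

theorem Dset_image (n : ℕ) :
    Dset n = (fun x : ℕ × Multiset ℕ => (2 * x.1 + 1) ::ₘ x.2) '' Tset n := by
  ext s
  constructor
  · rintro ⟨⟨h1, h2, h3⟩, ⟨k, hk⟩, h5⟩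
    have hle : ∀ i ∈ s, i ≤ s.sup := fun i hi => Multiset.le_sup hi
    have hm : s.sup ∈ s := Multiset.count_pos.1 (by omega)
    rw [hk] at hm h5 hle
    obtain ⟨t, rfl⟩ := Multiset.exists_cons_of_mem hm
    rw [Multiset.count_cons_self] at h5
    have h0 : 2 * k + 1 ∉ t := Multiset.count_eq_zero.1 (by omega)
    refine ⟨(k, t), ⟨fun i hi => ?_, ?_, EDm_of_cons h3⟩, rfl⟩
    · have a := h1 i (Multiset.mem_cons_of_mem hi)
      have b := hle i (Multiset.mem_cons_of_mem hi)
      have : i ≠ 2 * k + 1 := by rintro rfl; exact h0 hi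
      dsimp only
      omega
    · simpa using h2
  · rintro ⟨⟨k, t⟩, ⟨h1, h2, h3⟩, rfl⟩
    dsimp only at *
    have hs : ((2 * k + 1) ::ₘ t).sup = 2 * k + 1 := by
      rw [Multiset.sup_cons]
      apply sup_eq_left.2
      exact Multiset.sup_le.2 fun i hi => by have := h1 i hi; omega
    have h0 : 2 * k + 1 ∉ t := fun hi => by have := h1 _ hi; omega
    refine ⟨⟨?_, by simpa using h2, EDm_cons_odd ⟨k, rfl⟩ h3⟩, ?_, ?_⟩
    · intro i hi
      rcases Multiset.mem_cons.1 hi with rfl | hi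
      · omega
      · exact (h1 i hi).1
    · rw [hs]; exact ⟨k, rfl⟩
    · rw [hs, Multiset.count_cons_self, Multiset.count_eq_zero_of_notMem h0]

theorem key_inj {a b k l : ℕ} {s t : Multiset ℕ} (h : a ::ₘ s = b ::ₘ t)
    (hs : ∀ i ∈ s, 0 < i ∧ i ≤ 2 * k) (ht : ∀ i ∈ t, 0 < i ∧ i ≤ 2 * l) :
    (a = b ∨ a ≤ 2 * l) ∧ (b = a ∨ b ≤ 2 * k) := by
  constructor
  · have : a ∈ b ::ₘ t := h ▸ Multiset.mem_cons_self a s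
    exact (Multiset.mem_cons.1 this).imp id fun h => (ht _ h).2
  · have : b ∈ a ::ₘ s := h ▸ Multiset.mem_cons_self b t
    exact (Multiset.mem_cons.1 this).imp id fun h => (hs _ h).2

theorem D_injOn (n : ℕ) :
    Set.InjOn (fun x : ℕ × Multiset ℕ => (2 * x.1 + 1) ::ₘ x.2) (Tset n) := by
  rintro ⟨k, s⟩ ⟨hs, -, -⟩ ⟨l, t⟩ ⟨ht, -, -⟩ h
  dsimp only at *
  have := key_inj h hs ht
  obtain rfl : k = l := by omega
  rw [Multiset.cons_inj_right] at h
  rw [h]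

theorem Tset_finite (n : ℕ) : (Tset n).Finite := by
  apply Set.Finite.of_finite_image _ (D_injOn n)
  rw [← Dset_image]
  exact (Pset_finite n).subset fun s hs => hs.1

theorem d3_eq_T (n : ℕ) : d3 n = (Tset n).ncard := by
  rw [d3_eq, Dset_image, Set.ncard_image_of_injOn (D_injOn n)]

theorem T_pos {n k : ℕ} {t : Multiset ℕ} (hn : 0 < n) (h : (k, t) ∈ Tset (n + 2)) : 0 < k := by
  obtain ⟨h1, h2, -⟩ := h
  dsimp only at *
  by_contra hk
  obtain rfl : k = 0 := by omega
  have : t = 0 := Multiset.eq_zero_of_forall_notMem fun i hi => by have := h1 i hi; omega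
  subst this
  simp at h2

theorem f_injOn {n : ℕ} (hn : 0 < n) :
    Set.InjOn (fun x : ℕ × Multiset ℕ => (2 * x.1 - 1) ::ₘ x.2) (Tset (n + 2)) := by
  rintro ⟨k, s⟩ hk ⟨l, t⟩ hl h
  have := T_pos hn hk
  have := T_pos hn hl
  have := key_inj h hk.1 hl.1
  dsimp only at *
  obtain rfl : k = l := by omega
  rw [Multiset.cons_inj_right] at h
  rw [h]

theorem g_injOn (n : ℕ) :
    Set.InjOn (fun x : ℕ × Multiset ℕ => (2 * x.1 + 2) ::ₘ x.2) (Tset n) := by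
  rintro ⟨k, s⟩ hk ⟨l, t⟩ hl h
  have := key_inj h hk.1 hl.1
  dsimp only at *
  obtain rfl : k = l := by omega
  rw [Multiset.cons_inj_right] at h
  rw [h]

theorem P_union {n : ℕ} (hn : 0 < n) :
    Pset n = (fun x : ℕ × Multiset ℕ => (2 * x.1 - 1) ::ₘ x.2) '' Tset (n + 2) ∪
      (fun x : ℕ × Multiset ℕ => (2 * x.1 + 2) ::ₘ x.2) '' Tset (n - 1) := by
  ext s
  constructor
  · rintro ⟨h1, h2, h3⟩
    have hne : s ≠ 0 := by rintro rfl; simp at h2; omega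
    obtain ⟨M, hM, hle⟩ : ∃ M ∈ s, ∀ i ∈ s, i ≤ M := by
      obtain ⟨a, ha⟩ := Multiset.exists_mem_of_ne_zero hne
      obtain ⟨M, hM, h⟩ := s.toFinset.exists_max_image id ⟨a, by simpa using ha⟩
      exact ⟨M, by simpa using hM, fun i hi => h i (by simpa using hi)⟩
    have hMpos := h1 M hM
    have first : ∀ k, 2 * k + 1 ∈ s → (∀ i ∈ s, i ≤ 2 * k + 2) →
        s ∈ (fun x : ℕ × Multiset ℕ => (2 * x.1 - 1) ::ₘ x.2) '' Tset (n + 2) := by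
      intro k hk hb
      obtain ⟨t, rfl⟩ := Multiset.exists_cons_of_mem hk
      refine ⟨(k + 1, t), ⟨fun i hi => ?_, ?_, EDm_of_cons h3⟩, ?_⟩
      · exact ⟨h1 i (Multiset.mem_cons_of_mem hi), hb i (Multiset.mem_cons_of_mem hi)⟩
      · rw [Multiset.sum_cons] at h2
        dsimp only
        omega
      · rfl
    by_cases hc : ∃ k, 2 * k + 1 ∈ s ∧ (∀ i ∈ s, i ≤ 2 * k + 2)
    · obtain ⟨k, hk, hb⟩ := hc
      exact Or.inl (first k hk hb)
    · right
      obtain ⟨k, rfl⟩ : ∃ k, M = 2 * k + 2 := by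
        rcases Nat.even_or_odd' M with ⟨j, rfl | rfl⟩
        · exact ⟨j - 1, by omega⟩
        · exact absurd ⟨j, hM, fun i hi => (hle i hi).trans (by omega)⟩ hc
      have hno : 2 * k + 1 ∉ s := fun h => hc ⟨k, h, hle⟩
      have hcount := h3 (2 * k + 2) ⟨k + 1, by ring⟩
      obtain ⟨t, rfl⟩ := Multiset.exists_cons_of_mem hM
      rw [Multiset.count_cons_self] at hcount
      have h0 : 2 * k + 2 ∉ t := Multiset.count_eq_zero.1 (by omega)
      refine ⟨(k, t), ⟨fun i hi => ?_, ?_, EDm_of_cons h3⟩, rfl⟩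
      · have hi' : i ∈ (2 * k + 2) ::ₘ t := (Multiset.mem_cons_of_mem hi : i ∈ (2 * k + 2) ::ₘ t)
        have a := h1 i hi'
        have b := hle i hi'
        have c : i ≠ 2 * k + 2 := by rintro rfl; exact h0 hi
        have d : i ≠ 2 * k + 1 := by rintro rfl; exact hno hi'
        dsimp only
        omega
      · rw [Multiset.sum_cons] at h2
        dsimp only
        omega
  · rintro (⟨⟨k, t⟩, h, rfl⟩ | ⟨⟨k, t⟩, h, rfl⟩)
    · have hk := T_pos hn h
      obtain ⟨h1, h2, h3⟩ := h
      dsimp only at *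
      refine ⟨fun i hi => ?_, ?_, EDm_cons_odd ⟨k - 1, by omega⟩ h3⟩
      · rcases Multiset.mem_cons.1 hi with rfl | hi
        · omega
        · exact (h1 i hi).1
      · rw [Multiset.sum_cons]; omega
    · obtain ⟨h1, h2, h3⟩ := h
      dsimp only at *
      refine ⟨fun i hi => ?_, ?_, EDm_cons_notMem (fun hi => ?_) h3⟩
      · rcases Multiset.mem_cons.1 hi with rfl | hi
        · omega
        · exact (h1 i hi).1
      · rw [Multiset.sum_cons]; omega
      · have := h1 _ hi
        omega

theorem d3_add_d3_eq_ped : ∀ n : ℕ, 0 < n → d3 (n + 2) + d3 (n - 1) = ped n := by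
  intro n hn
  rw [ped_eq_s2, P_union hn, Set.ncard_union_eq _ ((Tset_finite _).image _) ((Tset_finite _).image _),
    Set.ncard_image_of_injOn (f_injOn hn), Set.ncard_image_of_injOn (g_injOn _), d3_eq_T, d3_eq_T]
  rw [Set.disjoint_left]
  rintro _ ⟨⟨k, s⟩, hk, rfl⟩ ⟨⟨l, t⟩, hl, h⟩
  have := T_pos hn hk
  have := key_inj h hl.1 hk.1
  dsimp only at *
  omega
end

section
/- For every integer n > 1, o1(n) + o1(n-1) = pod(n). -/
/-- Number of partitions of n with no odd part repeated. -/
noncomputable def pod (n : ℕ) : ℕ := Nat.card {p : n.Partition // OddDistinct p}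

/-- Number of partitions of n with no odd part repeated and largest part even. -/
noncomputable def o1 (n : ℕ) : ℕ :=
  Nat.card {p : n.Partition // OddDistinct p ∧ p.parts ≠ 0 ∧ Even (maxPart p)}

theorem aux_decomp (s : Multiset ℕ) (h : s ≠ 0) :
    ∃ t, s = s.sup ::ₘ t ∧ s.erase s.sup = t ∧ t.sup ≤ s.sup := by
  have key : ∀ s : Multiset ℕ, s ≠ 0 → s.sup ∈ s := by
    intro s
    induction s using Multiset.induction with
    | empty => simp
    | cons a t ih =>
      intro _
      rw [Multiset.sup_cons]
      by_cases ht : t = 0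
      · subst ht; simp
      · rcases le_total a t.sup with hh | hh
        · rw [sup_eq_right.2 hh]; exact Multiset.mem_cons_of_mem (ih ht)
        · rw [sup_eq_left.2 hh]; exact Multiset.mem_cons_self a t
  refine ⟨s.erase s.sup, (Multiset.cons_erase (key s h)).symm, rfl, ?_⟩
  exact Multiset.sup_mono (Multiset.subset_of_le (Multiset.erase_le _ _))

theorem aux_notMem {t : Multiset ℕ} {m : ℕ} (h : t.sup < m) : m ∉ t :=
  fun hm => absurd (Multiset.le_sup hm) (by omega)

theorem aux_lt {t : Multiset ℕ} {m : ℕ} (h : t.sup ≤ m) (hm : m ∉ t) (h0 : 0 < m) :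
    t.sup < m := by
  have : t.sup ≤ m - 1 := Multiset.sup_le.2 fun b hb => by
    have h1 := Multiset.le_sup hb
    have : b ≠ m := fun e => hm (e ▸ hb)
    omega
  omega

/-- multiset-level conditions, largest part even -/
def PE (n : ℕ) (s : Multiset ℕ) : Prop :=
  ((∀ i ∈ s, 0 < i) ∧ s.sum = n) ∧ (∀ i, Odd i → s.count i ≤ 1) ∧ s ≠ 0 ∧ Even s.sup

/-- multiset-level conditions, largest part odd -/
def PO (n : ℕ) (s : Multiset ℕ) : Prop :=
  ((∀ i ∈ s, 0 < i) ∧ s.sum = n) ∧ (∀ i, Odd i → s.count i ≤ 1) ∧ ¬ Even s.sup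

theorem aux_up {n : ℕ} {s : Multiset ℕ} (h : PE n s) :
    PO (n + 1) ((s.sup + 1) ::ₘ s.erase s.sup) ∧
    ((s.sup + 1) ::ₘ s.erase s.sup).sup = s.sup + 1 ∧
    (s.sup + 1 - 1) ::ₘ ((s.sup + 1) ::ₘ s.erase s.sup).erase (s.sup + 1) = s := by
  obtain ⟨⟨hp, hs⟩, hc, h0, he⟩ := h
  obtain ⟨t, h1, h2, h3⟩ := aux_decomp s h0
  rw [h2]
  generalize s.sup = m at *
  subst h1
  have hsup : ((m + 1) ::ₘ t).sup = m + 1 := by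
    rw [Multiset.sup_cons]; exact sup_eq_left.2 (by omega)
  refine ⟨⟨⟨?_, ?_⟩, ?_, ?_⟩, hsup, by simp⟩
  · intro i hi
    rcases Multiset.mem_cons.1 hi with rfl | hi
    · omega
    · exact hp i (Multiset.mem_cons_of_mem hi)
  · simp at hs ⊢; omega
  · intro i hi
    by_cases e : i = m + 1
    · subst e
      rw [Multiset.count_cons_self, Multiset.count_eq_zero.2 (aux_notMem (by omega))]
    · rw [Multiset.count_cons_of_ne e]
      exact (Multiset.count_le_count_cons _ _ _).trans (hc i hi)
  · rw [hsup]; grind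

theorem aux_down {n : ℕ} (hn : 0 < n) {s : Multiset ℕ} (h : PO (n + 1) s) :
    PE n ((s.sup - 1) ::ₘ s.erase s.sup) ∧
    ((s.sup - 1) ::ₘ s.erase s.sup).sup = s.sup - 1 ∧
    (s.sup - 1 + 1) ::ₘ ((s.sup - 1) ::ₘ s.erase s.sup).erase (s.sup - 1) = s := by
  obtain ⟨⟨hp, hs⟩, hc, he⟩ := h
  have h0 : s ≠ 0 := by rintro rfl; simp at hs
  obtain ⟨t, h1, h2, h3⟩ := aux_decomp s h0
  rw [h2]
  generalize s.sup = m at *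
  subst h1
  have hodd : Odd m := Nat.not_even_iff_odd.1 he
  have hm : m ∉ t := by
    have := hc m hodd
    rw [Multiset.count_cons_self] at this
    exact Multiset.count_eq_zero.1 (by omega)
  have hm0 := hodd.pos
  have hlt := aux_lt h3 hm hm0
  have hsup : ((m - 1) ::ₘ t).sup = m - 1 := by
    rw [Multiset.sup_cons]; exact sup_eq_left.2 (by omega)
  have hm1 : m ≠ 1 := by
    rintro rfl
    have : t = 0 := Multiset.eq_zero_of_forall_notMem fun a ha => by
      have h1 := Multiset.le_sup ha
      have h2 := hp a (Multiset.mem_cons_of_mem ha)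
      omega
    subst this
    simp at hs
    omega
  refine ⟨⟨⟨?_, ?_⟩, ?_, by simp, ?_⟩, hsup, ?_⟩
  · intro i hi
    rcases Multiset.mem_cons.1 hi with rfl | hi
    · omega
    · exact hp i (Multiset.mem_cons_of_mem hi)
  · simp at hs ⊢; omega
  · intro i hi
    have e : i ≠ m - 1 := by grind
    rw [Multiset.count_cons_of_ne e]
    exact (Multiset.count_le_count_cons _ _ _).trans (hc i hi)
  · rw [hsup]; grind
  · rw [Multiset.erase_cons_head, Nat.sub_add_cancel hm0]

/-- The bijection on multisets. -/
def auxEquiv (n : ℕ) (hn : 0 < n) : {s // PE n s} ≃ {s // PO (n + 1) s} where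
  toFun s := ⟨_, (aux_up s.2).1⟩
  invFun s := ⟨_, (aux_down hn s.2).1⟩
  left_inv s := by
    apply Subtype.ext
    have := aux_up s.2
    simp only [this.2.1, this.2.2]
  right_inv s := by
    apply Subtype.ext
    have := aux_down hn s.2
    simp only [this.2.1, this.2.2]

/-- Partitions with even largest part as multisets. -/
def equivE (n : ℕ) :
    {p : n.Partition // OddDistinct p ∧ p.parts ≠ 0 ∧ Even (maxPart p)} ≃ {s // PE n s} where
  toFun p := ⟨p.1.parts, ⟨fun _ hi => p.1.parts_pos hi, p.1.parts_sum⟩, p.2⟩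
  invFun s := ⟨⟨s.1, fun {i} hi => s.2.1.1 i hi, s.2.1.2⟩, s.2.2⟩
  left_inv _ := rfl
  right_inv _ := rfl

/-- Partitions with odd largest part as multisets. -/
def equivO (n : ℕ) :
    {p : n.Partition // OddDistinct p ∧ ¬ Even (maxPart p)} ≃ {s // PO n s} where
  toFun p := ⟨p.1.parts, ⟨fun _ hi => p.1.parts_pos hi, p.1.parts_sum⟩, p.2⟩
  invFun s := ⟨⟨s.1, fun {i} hi => s.2.1.1 i hi, s.2.1.2⟩, s.2.2⟩
  left_inv _ := rfl
  right_inv _ := rfl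

theorem o1_add_o1_eq_pod : ∀ n : ℕ, 1 < n → o1 n + o1 (n - 1) = pod n := by
  classical
  intro n hn
  obtain ⟨k, rfl⟩ : ∃ k, n = k + 1 := ⟨n - 1, by omega⟩
  have hk : 0 < k := by omega
  rw [Nat.add_sub_cancel]
  have h1 : o1 k = Nat.card {p : (k + 1).Partition // OddDistinct p ∧ ¬ Even (maxPart p)} :=
    Nat.card_congr (((equivE k).trans (auxEquiv k hk)).trans (equivO (k + 1)).symm)
  rw [h1, o1, pod]
  simp only [Nat.card_eq_fintype_card, Fintype.card_subtype]
  rw [← Finset.card_filter_add_card_filter_not (s := Finset.univ.filter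
    fun p : (k + 1).Partition => OddDistinct p) (fun p => Even (maxPart p))]
  simp only [Finset.filter_filter]
  congr 2
  ext p
  have : p.parts ≠ 0 := by
    intro h
    have := p.parts_sum
    simp [h] at this
  simp [this]
end

section
/- For every integer n > 4, o2(n) + o2(n-3) = pod_{>2}(n). -/
/-- Number of partitions of n with no odd part repeated and every part > 2. -/
noncomputable def podGtTwo (n : ℕ) : ℕ :=
  Nat.card {p : n.Partition // OddDistinct p ∧ ∀ i ∈ p.parts, 2 < i}

/-- Number of partitions of n with no odd part repeated, largest part even,
and the largest part appearing at least twice. -/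
noncomputable def o2 (n : ℕ) : ℕ :=
  Nat.card {p : n.Partition // OddDistinct p ∧ p.parts ≠ 0 ∧ Even (maxPart p) ∧
    2 ≤ p.parts.count (maxPart p)}

open PowerSeries in
theorem fin_parts (L m : ℕ) (hL : 1 ≤ L) (Q : Multiset ℕ → Prop) :
    {s : Multiset ℕ | s.sum = m ∧ (∀ i ∈ s, L ≤ i) ∧ Q s}.Finite := by
  apply (Set.finite_range (fun p : m.Partition => p.parts)).subset
  rintro s ⟨h1, h2, -⟩
  exact ⟨⟨s, fun {i} hi => by have := h2 i hi; omega, h1⟩, rfl⟩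

def GG (L b m : ℕ) : Set (Multiset ℕ) :=
  {s | s.sum = m ∧ (∀ i ∈ s, L ≤ i) ∧ (∀ i ∈ s, i ≤ b) ∧ ∀ i, Odd i → s.count i ≤ 1}

def UU (b m : ℕ) : Set (Multiset ℕ) :=
  {s | s.sum = m ∧ (∀ i ∈ s, 1 ≤ i) ∧ (∀ i ∈ s, i ≤ b) ∧ (∀ i, Odd i → s.count i ≤ 1) ∧
    s ≠ 0 ∧ Even s.sup ∧ 2 ≤ s.count s.sup}

theorem GG_fin (L b m : ℕ) (hL : 1 ≤ L) : (GG L b m).Finite := fin_parts L m hL _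
theorem UU_fin (b m : ℕ) : (UU b m).Finite := fin_parts 1 m le_rfl _

theorem GG_odd (L b m : ℕ) (hL : 1 ≤ L) (hb : L ≤ b + 1) (ho : Odd (b+1)) :
    (GG L (b+1) m).ncard =
      (GG L b m).ncard + if b + 1 ≤ m then (GG L b (m - (b+1))).ncard else 0 := by
  have key : GG L (b+1) m = GG L b m ∪
      if b + 1 ≤ m then (Multiset.cons (b+1)) '' (GG L b (m - (b+1))) else ∅ := by
    ext s
    constructor
    · rintro ⟨h1, h2, h3, h4⟩
      by_cases hs : b + 1 ∈ s
      · right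
        obtain ⟨t, rfl⟩ := Multiset.exists_cons_of_mem hs
        simp only [Multiset.sum_cons] at h1
        rw [if_pos (by omega)]
        refine ⟨t, ⟨by omega, fun i hi => h2 i (by simp [hi]), fun i hi => ?_, fun i hi => ?_⟩, rfl⟩
        · have := h3 i (by simp [hi])
          have h5 := h4 _ ho
          rw [Multiset.count_cons_self] at h5
          have h6 : b + 1 ∉ t := Multiset.count_eq_zero.1 (by omega)
          have : i ≠ b + 1 := by rintro rfl; exact h6 hi
          omega
        · exact (Multiset.count_le_count_cons _ _ _).trans (h4 i hi)
      · left
        refine ⟨h1, h2, fun i hi => ?_, h4⟩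
        have := h3 i hi
        have : i ≠ b + 1 := by rintro rfl; exact hs hi
        omega
    · rintro (⟨h1, h2, h3, h4⟩ | h)
      · exact ⟨h1, h2, fun i hi => (h3 i hi).trans (by omega), h4⟩
      · split_ifs at h with hm
        · obtain ⟨t, ⟨h1, h2, h3, h4⟩, rfl⟩ := h
          refine ⟨by rw [Multiset.sum_cons]; omega, ?_, ?_, ?_⟩
          · intro i hi
            rcases Multiset.mem_cons.1 hi with rfl | hi
            · exact hb
            · exact h2 i hi
          · intro i hi
            rcases Multiset.mem_cons.1 hi with rfl | hi
            · exact le_rfl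
            · exact (h3 i hi).trans (by omega)
          · intro i hi
            rw [Multiset.count_cons]
            split_ifs with hib
            · have : t.count i = 0 := Multiset.count_eq_zero.2 (fun h => by have := h3 i h; omega)
              omega
            · exact h4 i hi
        · exact h.elim
  rw [key, Set.ncard_union_eq ?_ ?_ ?_]
  · split_ifs
    · rw [Set.ncard_image_of_injective _ (fun a b h => by simpa using h)]
    · simp
  · rw [Set.disjoint_left]
    rintro s ⟨h1, h2, h3, h4⟩ h
    split_ifs at h
    · obtain ⟨t, -, rfl⟩ := h
      have := h3 (b+1) (by simp)
      omega
    · exact h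
  · exact GG_fin _ _ _ hL
  · split_ifs
    · exact (GG_fin _ _ _ hL).image _
    · exact Set.finite_empty

theorem GG_even (L b m : ℕ) (hL : 1 ≤ L) (hb : L ≤ b + 1) (ho : Even (b+1)) :
    (GG L (b+1) m).ncard =
      (GG L b m).ncard + if b + 1 ≤ m then (GG L (b+1) (m - (b+1))).ncard else 0 := by
  have key : GG L (b+1) m = GG L b m ∪
      if b + 1 ≤ m then (Multiset.cons (b+1)) '' (GG L (b+1) (m - (b+1))) else ∅ := by
    ext s
    constructor
    · rintro ⟨h1, h2, h3, h4⟩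
      by_cases hs : b + 1 ∈ s
      · right
        obtain ⟨t, rfl⟩ := Multiset.exists_cons_of_mem hs
        simp only [Multiset.sum_cons] at h1
        rw [if_pos (by omega)]
        refine ⟨t, ⟨by omega, fun i hi => h2 i (by simp [hi]), fun i hi => h3 i (by simp [hi]),
          fun i hi => ?_⟩, rfl⟩
        exact (Multiset.count_le_count_cons _ _ _).trans (h4 i hi)
      · left
        refine ⟨h1, h2, fun i hi => ?_, h4⟩
        have := h3 i hi
        have : i ≠ b + 1 := by rintro rfl; exact hs hi
        omega
    · rintro (⟨h1, h2, h3, h4⟩ | h)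
      · exact ⟨h1, h2, fun i hi => (h3 i hi).trans (by omega), h4⟩
      · split_ifs at h with hm
        · obtain ⟨t, ⟨h1, h2, h3, h4⟩, rfl⟩ := h
          refine ⟨by rw [Multiset.sum_cons]; omega, ?_, ?_, ?_⟩
          · intro i hi
            rcases Multiset.mem_cons.1 hi with rfl | hi
            · exact hb
            · exact h2 i hi
          · intro i hi
            rcases Multiset.mem_cons.1 hi with rfl | hi
            · exact le_rfl
            · exact h3 i hi
          · intro i hi
            rw [Multiset.count_cons]
            split_ifs with hib
            · subst hib
              exact absurd ho (Nat.not_even_iff_odd.2 hi)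
            · exact h4 i hi
        · exact h.elim
  rw [key, Set.ncard_union_eq ?_ ?_ ?_]
  · split_ifs
    · rw [Set.ncard_image_of_injective _ (fun a b h => by simpa using h)]
    · simp
  · rw [Set.disjoint_left]
    rintro s ⟨h1, h2, h3, h4⟩ h
    split_ifs at h
    · obtain ⟨t, -, rfl⟩ := h
      have := h3 (b+1) (by simp)
      omega
    · exact h
  · exact GG_fin _ _ _ hL
  · split_ifs
    · exact (GG_fin _ _ _ hL).image _
    · exact Set.finite_empty

theorem sup_mem_of_ne (s : Multiset ℕ) (h : s ≠ 0) : s.sup ∈ s := by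
  induction s using Multiset.induction_on with
  | empty => exact absurd rfl h
  | cons a t ih =>
    rw [Multiset.sup_cons]
    by_cases ht : t = 0
    · subst ht; simp
    · rcases le_total a t.sup with h' | h'
      · rw [sup_eq_right.2 h']; exact Multiset.mem_cons_of_mem (ih ht)
      · rw [sup_eq_left.2 h']; exact Multiset.mem_cons_self _ _

theorem UU_step (k m : ℕ) :
    (UU (2*k+2) m).ncard =
      (UU (2*k) m).ncard + if 4*k+4 ≤ m then (GG 1 (2*k+2) (m - (4*k+4))).ncard else 0 := by
  have key : UU (2*k+2) m = UU (2*k) m ∪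
      if 4*k+4 ≤ m then (fun t => (2*k+2) ::ₘ (2*k+2) ::ₘ t) '' (GG 1 (2*k+2) (m - (4*k+4)))
      else ∅ := by
    ext s
    constructor
    · rintro ⟨h1, h2, h3, h4, h5, h6, h7⟩
      by_cases hs : s.sup = 2*k+2
      · right
        have hmem := sup_mem_of_ne s h5
        rw [hs] at hmem h7
        obtain ⟨t, rfl⟩ := Multiset.exists_cons_of_mem hmem
        rw [Multiset.count_cons_self] at h7
        have hmem2 : 2*k+2 ∈ t := Multiset.count_pos.1 (by omega)
        obtain ⟨t, rfl⟩ := Multiset.exists_cons_of_mem hmem2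
        simp only [Multiset.sum_cons] at h1
        rw [if_pos (by omega)]
        refine ⟨t, ⟨by omega, fun i hi => h2 i (by simp [hi]), fun i hi => h3 i (by simp [hi]),
          fun i hi => ?_⟩, rfl⟩
        exact ((Multiset.count_le_count_cons _ _ _).trans
          (Multiset.count_le_count_cons _ _ _)).trans (h4 i hi)
      · left
        refine ⟨h1, h2, fun i hi => ?_, h4, h5, h6, h7⟩
        have := h3 _ (sup_mem_of_ne s h5)
        have := Multiset.le_sup hi
        obtain ⟨r, hr⟩ := h6
        omega
    · rintro (⟨h1, h2, h3, h4⟩ | h)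
      · exact ⟨h1, h2, fun i hi => (h3 i hi).trans (by omega), h4⟩
      · split_ifs at h with hm
        · obtain ⟨t, ⟨h1, h2, h3, h4⟩, rfl⟩ := h
          have hsup : ((2*k+2) ::ₘ (2*k+2) ::ₘ t).sup = 2*k+2 := by
            rw [Multiset.sup_cons, Multiset.sup_cons, sup_eq_left.2 (Multiset.sup_le.2 h3), sup_idem]
          refine ⟨by simp only [Multiset.sum_cons]; omega, ?_, ?_, ?_, by simp, ?_, ?_⟩
          · intro i hi
            simp only [Multiset.mem_cons] at hi
            rcases hi with rfl | rfl | hi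
            · omega
            · omega
            · exact h2 i hi
          · intro i hi
            simp only [Multiset.mem_cons] at hi
            rcases hi with rfl | rfl | hi
            · omega
            · omega
            · exact h3 i hi
          · intro i hi
            have : i ≠ 2*k+2 := by
              rintro rfl
              obtain ⟨r, hr⟩ := hi
              omega
            simp only [Multiset.count_cons_of_ne this]
            exact h4 i hi
          · simp only [hsup]; exact ⟨k+1, by ring⟩
          · simp only [hsup, Multiset.count_cons_self]; omega
        · exact h.elim
  rw [key, Set.ncard_union_eq ?_ ?_ ?_]
  · split_ifs
    · rw [Set.ncard_image_of_injective _ (fun a b h => by simpa using h)]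
    · simp
  · rw [Set.disjoint_left]
    rintro s ⟨h1, h2, h3, h4⟩ h
    split_ifs at h
    · obtain ⟨t, -, rfl⟩ := h
      have := h3 (2*k+2) (by simp)
      omega
    · exact h
  · exact UU_fin _ _
  · split_ifs
    · exact (GG_fin _ _ _ le_rfl).image _
    · exact Set.finite_empty

theorem UU_zero (m : ℕ) : (UU 0 m).ncard = 0 := by
  have : UU 0 m = ∅ := by
    ext s
    simp only [Set.mem_empty_iff_false, iff_false]
    rintro ⟨h1, h2, h3, h4, h5, -⟩
    have := h2 _ (sup_mem_of_ne s h5)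
    have := h3 _ (sup_mem_of_ne s h5)
    omega
  simp [this]

theorem GG_low (L b m : ℕ) (h : b < L) : (GG L b m).ncard = if m = 0 then 1 else 0 := by
  have hz : ∀ s ∈ GG L b m, s = 0 := by
    rintro s ⟨h1, h2, h3, h4⟩
    by_contra h5
    have := h2 _ (sup_mem_of_ne s h5)
    have := h3 _ (sup_mem_of_ne s h5)
    omega
  split_ifs with hm
  · subst hm
    rw [Set.ncard_eq_one]
    refine ⟨0, Set.eq_singleton_iff_unique_mem.2 ⟨by simp [GG], hz⟩⟩
  · have : GG L b m = ∅ := by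
      ext s
      simp only [Set.mem_empty_iff_false, iff_false]
      intro hs
      have h0 := hz s hs
      subst h0
      exact hm (by simpa using hs.1.symm)
    simp [this]

noncomputable def gs (L b : ℕ) : PowerSeries ℤ := PowerSeries.mk fun m => ((GG L b m).ncard : ℤ)
noncomputable def us (b : ℕ) : PowerSeries ℤ := PowerSeries.mk fun m => ((UU b m).ncard : ℤ)

open PowerSeries in
theorem gs_odd (L b : ℕ) (hL : 1 ≤ L) (hb : L ≤ b + 1) (ho : Odd (b+1)) :
    gs L (b+1) = gs L b + X^(b+1) * gs L b := by
  ext m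
  simp only [gs, map_add, coeff_X_pow_mul', coeff_mk, GG_odd L b m hL hb ho]
  split_ifs <;> simp

open PowerSeries in
theorem gs_even (L b : ℕ) (hL : 1 ≤ L) (hb : L ≤ b + 1) (ho : Even (b+1)) :
    gs L (b+1) = gs L b + X^(b+1) * gs L (b+1) := by
  ext m
  simp only [gs, map_add, coeff_X_pow_mul', coeff_mk]
  rw [GG_even L b m hL hb ho]
  split_ifs <;> simp

open PowerSeries in
theorem gs_low (L b : ℕ) (h : b < L) : gs L b = 1 := by
  ext m
  simp only [gs, coeff_mk, coeff_one, GG_low L b m h]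
  split_ifs <;> simp

open PowerSeries in
theorem us_step (k : ℕ) : us (2*k+2) = us (2*k) + X^(4*k+4) * gs 1 (2*k+2) := by
  ext m
  simp only [us, gs, map_add, coeff_X_pow_mul', coeff_mk, UU_step k m]
  split_ifs <;> simp

theorem us_zero : us 0 = 0 := by
  ext m
  simp [us, UU_zero]

theorem X_pow_cancel (b : ℕ) {p q : PowerSeries ℤ}
    (h : (1 - PowerSeries.X^(b+1)) * p = (1 - PowerSeries.X^(b+1)) * q) : p = q := by
  refine mul_left_cancel₀ ?_ h
  intro h0
  have := congrArg (PowerSeries.coeff 0) h0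
  simp at this

open PowerSeries in
theorem gs_three (b : ℕ) : gs 3 (b+2) = (1 - X) * gs 1 (b+2) := by
  induction b with
  | zero =>
    have e1 := gs_odd 1 0 le_rfl (by omega) (by decide)
    have e2 := gs_even 1 1 le_rfl (by omega) (by decide)
    rw [gs_low 1 0 (by omega)] at e1
    have e3 := gs_low 3 2 (by omega)
    simp only [zero_add, Nat.reduceAdd] at *
    rw [e3]
    apply X_pow_cancel 1
    linear_combination (-(1 - X)) * e2 - (1-X) * e1
  | succ b ih =>
    rcases Nat.even_or_odd (b+2+1) with ho | ho
    · have e1 := gs_even 1 (b+2) le_rfl (by omega) ho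
      have e2 := gs_even 3 (b+2) (by omega) (by omega) ho
      rw [show b+1+2 = b+2+1 by ring]
      apply X_pow_cancel (b+2)
      linear_combination e2 + ih - (1-X) * e1
    · have e1 := gs_odd 1 (b+2) le_rfl (by omega) ho
      have e2 := gs_odd 3 (b+2) (by omega) (by omega) ho
      rw [show b+1+2 = b+2+1 by ring, e1, e2, ih]
      ring

open PowerSeries in
theorem main_id (K : ℕ) : (1 + us (2*K+4)) + X^3 * (1 + us (2*K+2)) =
    gs 3 (2*K+3) + X^(2*K+4) * gs 1 (2*K+4) := by
  induction K with
  | zero =>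
    have u1 := us_step 0
    have u2 := us_step 1
    have a3 := gs_odd 1 2 le_rfl (by omega) (by decide)
    have a4 := gs_even 1 3 le_rfl (by omega) (by decide)
    have p3 := gs_odd 3 2 (by omega) (by omega) (by decide)
    rw [gs_low 3 2 (by omega)] at p3
    simp only [mul_zero, zero_add, Nat.reduceAdd, Nat.reduceMul, us_zero] at *
    rw [p3, u2, u1]
    linear_combination (-X^4) * (a4 + a3)
  | succ K ih =>
    have u2 := us_step (K+1)
    have u1 := us_step K
    have a2 := gs_even 1 (2*K+3) le_rfl (by omega) ⟨K+2, by ring⟩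
    have a3 := gs_odd 1 (2*K+4) le_rfl (by omega) ⟨K+2, by ring⟩
    have a4 := gs_even 1 (2*K+5) le_rfl (by omega) ⟨K+3, by ring⟩
    have u3 := us_step (K+2)
    have p1 := gs_three (2*K+1)
    have p2 := gs_three (2*K+3)
    simp only [show 2*(K+1) = 2*K+2 by ring, show 2*(K+2) = 2*K+4 by ring, 
      show 4*(K+1) = 4*K+4 by ring, show 4*(K+2) = 4*K+8 by ring, add_assoc, Nat.reduceAdd] at *
    linear_combination ih + u3 + X^3 * u2 - p2 + p1 - X^(2*K+6) * a4 -
      (X^(2*K+6) + 1 - X) * a3 - (1 - X) * a2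

theorem pod_eq (n b : ℕ) (h : n ≤ b) : podGtTwo n = (GG 3 b n).ncard := by
  unfold podGtTwo
  rw [← Nat.card_coe_set_eq]
  refine Nat.card_congr ⟨fun p => ⟨p.1.parts, p.1.parts_sum, fun i hi => p.2.2 i hi, fun i hi => ?_,
    p.2.1⟩, fun s => ⟨⟨s.1, fun {i} hi => ?_, s.2.1⟩, s.2.2.2.2, fun i hi => s.2.2.1 i hi⟩,
    fun p => rfl, fun s => rfl⟩
  · have := Multiset.le_sum_of_mem hi
    rw [p.1.parts_sum] at this
    omega
  · have := s.2.2.1 i hi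
    omega

theorem o2_eq (n b : ℕ) (h : n ≤ b) : o2 n = (UU b n).ncard := by
  unfold o2
  rw [← Nat.card_coe_set_eq]
  refine Nat.card_congr ⟨fun p => ⟨p.1.parts, p.1.parts_sum, fun i hi => p.1.parts_pos hi,
    fun i hi => ?_, p.2⟩, fun s => ⟨⟨s.1, fun {i} hi => s.2.2.1 i hi, s.2.1⟩, s.2.2.2.2⟩,
    fun p => rfl, fun s => rfl⟩
  have := Multiset.le_sum_of_mem hi
  rw [p.1.parts_sum] at this
  omega

theorem o2_add_o2_eq_podGtTwo : ∀ n : ℕ, 4 < n → o2 n + o2 (n - 3) = podGtTwo n := by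
  intro n hn
  have h := congrArg (PowerSeries.coeff n) (main_id n)
  simp only [map_add, PowerSeries.coeff_X_pow_mul', mul_add, mul_one, PowerSeries.coeff_one,
    PowerSeries.coeff_X_pow, us, gs, PowerSeries.coeff_mk] at h
  rw [if_neg (by omega), if_neg (by omega), if_pos (by omega), if_neg (by omega)] at h
  rw [o2_eq n (2*n+4) (by omega), o2_eq (n-3) (2*n+2) (by omega), pod_eq n (2*n+3) (by omega)]
  zify
  linarith
end

section
/- For every integer n ≥ 1, d3(n+2) equals the number of partitions of n in which no even part is repeated and either the largest part is odd, or the largest part is even and the largest part minus 1 also occurs as a part. (The bijection subtracts 2 from the largest part of partitions counted by d3(n+2), which are of the forms (2j+1, 2j, h, ...) with h ≤ 2j-1, (2j+1, 2j-1, h, ...) with h ≤ 2j-1, or (2j+1, h, ...) with h < 2j-1.) -/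
def MidT (n : ℕ) : Type :=
  {q : ℕ × Multiset ℕ // Odd q.1 ∧ (∀ x ∈ q.2, 0 < x ∧ x ≤ q.1 + 1) ∧
    (∀ i, Even i → q.2.count i ≤ 1) ∧ q.1 + q.2.sum = n}

def midA {n : ℕ} (q : MidT n) : (n + 2).Partition where
  parts := (q.1.1 + 2) ::ₘ q.1.2
  parts_pos := by
    intro i hi
    rcases Multiset.mem_cons.1 hi with h | h
    · omega
    · exact (q.2.2.1 i h).1
  parts_sum := by
    have := q.2.2.2.2
    rw [Multiset.sum_cons]; omega

def midB {n : ℕ} (q : MidT n) : n.Partition where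
  parts := q.1.1 ::ₘ q.1.2
  parts_pos := by
    intro i hi
    rcases Multiset.mem_cons.1 hi with h | h
    · have := q.2.1.pos; omega
    · exact (q.2.2.1 i h).1
  parts_sum := by
    have := q.2.2.2.2
    rw [Multiset.sum_cons]; omega

lemma count_cons_odd {m : ℕ} (hm : Odd m) {s : Multiset ℕ} {i : ℕ} (hi : Even i) :
    (m ::ₘ s).count i = s.count i := by
  apply Multiset.count_cons_of_ne
  rintro rfl
  exact (Nat.not_even_iff_odd.2 hm) hi

lemma sup_mem_of_pos : ∀ s : Multiset ℕ, 0 < s.sup → s.sup ∈ s := by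
  intro s
  induction s using Multiset.induction with
  | empty => simp
  | cons a s ih =>
    intro h
    rw [Multiset.sup_cons] at h ⊢
    rcases le_total s.sup a with h1 | h1
    · rw [sup_eq_left.2 h1]; simp
    · rw [sup_eq_right.2 h1] at h ⊢
      exact Multiset.mem_cons_of_mem (ih h)

lemma midA_max {n : ℕ} (q : MidT n) : maxPart (midA q) = q.1.1 + 2 := by
  unfold maxPart midA
  simp only [Multiset.sup_cons]
  apply sup_eq_left.2
  exact Multiset.sup_le.2 fun x hx => by have := (q.2.2.1 x hx).2; omega

lemma midA_prop {n : ℕ} (q : MidT n) : EvenDistinct (midA q) ∧ Odd (maxPart (midA q)) ∧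
    (midA q).parts.count (maxPart (midA q)) = 1 := by
  have ho : Odd (q.1.1 + 2) := by have := q.2.1; grind
  refine ⟨?_, ?_, ?_⟩
  · intro i hi
    exact (count_cons_odd ho hi).le.trans (q.2.2.2.1 i hi)
  · rw [midA_max]; exact ho
  · rw [midA_max]
    have : q.1.1 + 2 ∉ q.1.2 := fun h => by have := (q.2.2.1 _ h).2; omega
    simp [midA, Multiset.count_eq_zero.2 this]

lemma midB_prop {n : ℕ} (q : MidT n) : EvenDistinct (midB q) ∧
    (Odd (maxPart (midB q)) ∨
      (Even (maxPart (midB q)) ∧ maxPart (midB q) - 1 ∈ (midB q).parts)) := by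
  refine ⟨?_, ?_⟩
  · intro i hi
    exact (count_cons_odd q.2.1 hi).le.trans (q.2.2.2.1 i hi)
  · have h1 : q.1.1 ≤ maxPart (midB q) := Multiset.le_sup (Multiset.mem_cons_self _ _)
    have h2 : maxPart (midB q) ≤ q.1.1 + 1 := Multiset.sup_le.2 fun x hx => by
      rcases Multiset.mem_cons.1 hx with h | h
      · omega
      · exact (q.2.2.1 x h).2
    have ho := q.2.1
    rcases (show maxPart (midB q) = q.1.1 ∨ maxPart (midB q) = q.1.1 + 1 by omega) with h | h
    · left; rw [h]; exact ho
    · right; rw [h]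
      exact ⟨ho.add_one, by simp [midB]⟩

lemma cons_inj_of {a b : ℕ} {s t : Multiset ℕ} (h : a ::ₘ s = b ::ₘ t) (ha : b ∉ s ∨ a ∉ t) :
    a = b ∧ s = t := by
  have hab : a = b := by
    by_contra hne
    rcases ha with h1 | h1
    · have : b ∈ a ::ₘ s := h ▸ Multiset.mem_cons_self _ _
      rcases Multiset.mem_cons.1 this with h2 | h2
      · exact hne h2.symm
      · exact h1 h2
    · have : a ∈ b ::ₘ t := h ▸ Multiset.mem_cons_self _ _
      rcases Multiset.mem_cons.1 this with h2 | h2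
      · exact hne h2
      · exact h1 h2
  subst hab
  exact ⟨rfl, (Multiset.cons_inj_right _).1 h⟩

lemma midA_inj {n : ℕ} {q r : MidT n} (h : midA q = midA r) : q = r := by
  have h' : (q.1.1 + 2) ::ₘ q.1.2 = (r.1.1 + 2) ::ₘ r.1.2 := congrArg Nat.Partition.parts h
  have := cons_inj_of h' (by
    rcases le_total q.1.1 r.1.1 with hl | hl
    · left; intro hm; have := (q.2.2.1 _ hm).2; omega
    · right; intro hm; have := (r.2.2.1 _ hm).2; omega)
  exact Subtype.ext (Prod.ext (by omega) this.2)

lemma midB_inj {n : ℕ} {q r : MidT n} (h : midB q = midB r) : q = r := by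
  have h' : q.1.1 ::ₘ q.1.2 = r.1.1 ::ₘ r.1.2 := congrArg Nat.Partition.parts h
  have hq := q.2.1
  have hr := r.2.1
  have : q.1.1 = r.1.1 ∧ q.1.2 = r.1.2 := by
    by_cases he : q.1.1 = r.1.1
    · exact ⟨he, by rw [he] at h'; exact (Multiset.cons_inj_right _).1 h'⟩
    refine cons_inj_of h' ?_
    rcases le_total q.1.1 r.1.1 with hl | hl
    · left; intro hm; have := (q.2.2.1 _ hm).2; grind
    · right; intro hm; have := (r.2.2.1 _ hm).2; grind
  exact Subtype.ext (Prod.ext this.1 this.2)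

lemma midA_surj {n : ℕ} (hn : 1 ≤ n) (p : (n + 2).Partition) (h1 : EvenDistinct p)
    (h2 : Odd (maxPart p)) (h3 : p.parts.count (maxPart p) = 1) : ∃ q : MidT n, midA q = p := by
  have hmem : maxPart p ∈ p.parts := Multiset.count_pos.1 (by omega)
  obtain ⟨s, hs⟩ := Multiset.exists_cons_of_mem hmem
  have hnot : maxPart p ∉ s := by
    rw [hs, Multiset.count_cons_self] at h3
    exact Multiset.count_eq_zero.1 (by omega)
  have hle : ∀ x ∈ s, 0 < x ∧ x < maxPart p := by
    intro x hx
    have hx' : x ∈ p.parts := by rw [hs]; exact Multiset.mem_cons_of_mem hx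
    refine ⟨p.parts_pos hx', lt_of_le_of_ne (Multiset.le_sup hx') ?_⟩
    rintro rfl; exact hnot hx
  have hsum : maxPart p + s.sum = n + 2 := by
    have := p.parts_sum
    rwa [hs, Multiset.sum_cons] at this
  have h4 : maxPart p ≠ 1 := by
    intro h
    have : s = 0 := Multiset.eq_zero_of_forall_notMem fun x hx => by
      have := hle x hx; omega
    rw [h, this] at hsum
    simp at hsum
  have h5 : 3 ≤ maxPart p := by grind
  have hm : maxPart p - 2 + 2 = maxPart p := by omega
  refine ⟨⟨(maxPart p - 2, s), ?_, ?_, ?_, ?_⟩, ?_⟩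
  · show Odd (maxPart p - 2); grind
  · intro x hx
    have := hle x hx
    show 0 < x ∧ x ≤ maxPart p - 2 + 1
    omega
  · intro i hi
    have := h1 i hi
    rwa [hs, count_cons_odd h2 hi] at this
  · show maxPart p - 2 + s.sum = n; omega
  · apply Nat.Partition.ext
    show (maxPart p - 2 + 2) ::ₘ s = p.parts
    rw [hm, ← hs]

lemma midB_surj_aux {n : ℕ} (p : n.Partition) (h1 : EvenDistinct p) (m : ℕ) (hm : m ∈ p.parts)
    (ho : Odd m) (hle : maxPart p ≤ m + 1) : ∃ q : MidT n, midB q = p := by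
  obtain ⟨s, hs⟩ := Multiset.exists_cons_of_mem hm
  refine ⟨⟨(m, s), ho, ?_, ?_, ?_⟩, ?_⟩
  · intro x hx
    have hx' : x ∈ p.parts := by rw [hs]; exact Multiset.mem_cons_of_mem hx
    exact ⟨p.parts_pos hx', (Multiset.le_sup hx').trans hle⟩
  · intro i hi
    have := h1 i hi
    rwa [hs, count_cons_odd ho hi] at this
  · have := p.parts_sum
    rwa [hs, Multiset.sum_cons] at this
  · apply Nat.Partition.ext
    exact hs.symm

lemma midB_surj {n : ℕ} (p : n.Partition) (h1 : EvenDistinct p)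
    (h2 : Odd (maxPart p) ∨ (Even (maxPart p) ∧ maxPart p - 1 ∈ p.parts)) :
    ∃ q : MidT n, midB q = p := by
  rcases h2 with h | ⟨h, hmem⟩
  · exact midB_surj_aux p h1 (maxPart p) (sup_mem_of_pos _ h.pos) h (Nat.le_succ _)
  · have := p.parts_pos hmem
    exact midB_surj_aux p h1 _ hmem (by grind) (by omega)

theorem d3_eq_card_odd_or_pred_mem : ∀ n : ℕ, 1 ≤ n →
    d3 (n + 2) =
      Nat.card {p : n.Partition // EvenDistinct p ∧
        (Odd (maxPart p) ∨ (Even (maxPart p) ∧ maxPart p - 1 ∈ p.parts))} := by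
  intro n hn
  unfold d3
  refine Eq.trans (Eq.symm ?_) (?_ : Nat.card (MidT n) = _)
  · refine Nat.card_eq_of_bijective (fun q => ⟨midA q, midA_prop q⟩) ⟨?_, ?_⟩
    · intro q r h
      exact midA_inj (congrArg Subtype.val h)
    · rintro ⟨p, h1, h2, h3⟩
      obtain ⟨q, hq⟩ := midA_surj hn p h1 h2 h3
      exact ⟨q, Subtype.ext hq⟩
  · refine Nat.card_eq_of_bijective (fun q => ⟨midB q, midB_prop q⟩) ⟨?_, ?_⟩
    · intro q r h
      exact midB_inj (congrArg Subtype.val h)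
    · rintro ⟨p, h1, h2⟩
      obtain ⟨q, hq⟩ := midB_surj p h1 h2
      exact ⟨q, Subtype.ext hq⟩
end

section
/- For every integer n ≥ 3, the number of partitions of n in which no odd part is repeated, at least one part equals 1 or 2, the largest part is even, and either the largest part appears at least twice or the largest part minus 1 also occurs as a part, equals the number of partitions of n in which no odd part is repeated, every part is at least 3, and either the largest part is odd, or the largest part is even, appears exactly once, and the largest part minus 1 does not occur as a part. -/
def ODm (s : Multiset ℕ) : Prop := ∀ i, Odd i → s.count i ≤ 1

def Um (s : Multiset ℕ) : Prop :=
  Odd s.sup ∨ (s ≠ 0 ∧ Even s.sup ∧ s.count s.sup = 1 ∧ s.sup - 1 ∉ s)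

def Sm (s : Multiset ℕ) : Prop := 1 ∈ s ∨ 2 ∈ s

def Fm (n : ℕ) : Finset (Multiset ℕ) :=
  (Finset.univ : Finset n.Partition).image (fun p => p.parts)

theorem mem_Fm (n : ℕ) (s : Multiset ℕ) : s ∈ Fm n ↔ s.sum = n ∧ ∀ i ∈ s, 0 < i := by
  simp only [Fm, Finset.mem_image, Finset.mem_univ, true_and]
  constructor
  · rintro ⟨p, rfl⟩
    exact ⟨p.parts_sum, fun i hi => p.parts_pos hi⟩
  · rintro ⟨h1, h2⟩
    exact ⟨⟨s, fun {i} hi => h2 i hi, h1⟩, rfl⟩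

open Classical in
theorem card_Fm (n : ℕ) (Q : Multiset ℕ → Prop) :
    Nat.card {p : n.Partition // Q p.parts} = ((Fm n).filter Q).card := by
  rw [Nat.card_eq_fintype_card, Fintype.card_subtype, Fm, Finset.filter_image,
    Finset.card_image_of_injective]
  intro p q h
  exact Nat.Partition.ext h

theorem sup_cons_of_le (M : ℕ) (t : Multiset ℕ) (h : ∀ i ∈ t, i ≤ M) : (M ::ₘ t).sup = M := by
  rw [Multiset.sup_cons]
  exact sup_eq_left.2 (Multiset.sup_le.2 h)

theorem exists_top (s : Multiset ℕ) (hs : s ≠ 0) :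
    ∃ M t, s = M ::ₘ t ∧ (∀ i ∈ t, i ≤ M) := by
  obtain ⟨M, hM, hmax⟩ := Multiset.exists_max_image id hs
  obtain ⟨t, rfl⟩ := Multiset.exists_cons_of_mem hM
  exact ⟨M, t, rfl, fun i hi => hmax i (Multiset.mem_cons_of_mem hi)⟩

def upm (s : Multiset ℕ) : Multiset ℕ := (s.sup + 1) ::ₘ s.erase s.sup
def downm (s : Multiset ℕ) : Multiset ℕ := (s.sup - 1) ::ₘ s.erase s.sup
def fm (s : Multiset ℕ) : Multiset ℕ := if 1 ∈ s then s.erase 1 else 1 ::ₘ s.erase 2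
def gm (s : Multiset ℕ) : Multiset ℕ := if 1 ∈ s then 2 ::ₘ s.erase 1 else 1 ::ₘ s

theorem upm_cons (M : ℕ) (t : Multiset ℕ) (h : ∀ i ∈ t, i ≤ M) :
    upm (M ::ₘ t) = (M + 1) ::ₘ t := by
  simp [upm, sup_cons_of_le M t h]

theorem downm_cons (M : ℕ) (t : Multiset ℕ) (h : ∀ i ∈ t, i ≤ M) :
    downm (M ::ₘ t) = (M - 1) ::ₘ t := by
  simp [downm, sup_cons_of_le M t h]

theorem up_ok (n : ℕ) (hn : 1 ≤ n) (s : Multiset ℕ) (hs : s ∈ Fm n) (ho : ODm s) :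
    upm s ∈ Fm (n+1) ∧ ODm (upm s) ∧ Um (upm s) ∧ downm (upm s) = s := by
  rw [mem_Fm] at hs
  have h0 : s ≠ 0 := by rintro rfl; simp at hs; omega
  obtain ⟨M, t, rfl, ht⟩ := exists_top s h0
  have ht' : ∀ i ∈ t, i ≤ M + 1 := fun i hi => (ht i hi).trans (Nat.le_succ _)
  have hM1 : M + 1 ∉ t := fun h => by have := ht _ h; omega
  rw [upm_cons M t ht, downm_cons _ _ ht', mem_Fm]
  simp only [Multiset.sum_cons, Multiset.mem_cons, forall_eq_or_imp] at hs ⊢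
  refine ⟨⟨by omega, by omega, hs.2.2⟩, ?_, ?_, by simp⟩
  · intro i hi
    have h := ho i hi
    rw [Multiset.count_cons] at h ⊢
    split_ifs with h1
    · subst h1; rw [Multiset.count_eq_zero_of_notMem hM1]
    · split_ifs at h <;> omega
  · unfold Um
    rw [sup_cons_of_le _ _ ht']
    rcases Nat.even_or_odd (M+1) with he | hodd
    · right
      refine ⟨by simp, he, by simp [hM1], ?_⟩
      have hMo : Odd M := by grind
      have := ho M hMo
      simp at this
      simp [this]
    · exact Or.inl hodd

theorem down_ok (n : ℕ) (hn : 1 ≤ n) (s : Multiset ℕ) (hs : s ∈ Fm (n+1)) (ho : ODm s)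
    (hu : Um s) : downm s ∈ Fm n ∧ ODm (downm s) ∧ upm (downm s) = s := by
  rw [mem_Fm] at hs
  have h0 : s ≠ 0 := by rintro rfl; simp at hs
  obtain ⟨M, t, rfl, ht⟩ := exists_top s h0
  unfold Um at hu
  rw [sup_cons_of_le _ _ ht] at hu
  simp only [Multiset.sum_cons, Multiset.mem_cons, forall_eq_or_imp] at hs
  have hMt : M ∉ t := by
    rcases hu with h | h
    · have := ho M h
      simpa using this
    · have := h.2.2.1
      simpa using this
  have ht' : ∀ i ∈ t, i ≤ M - 1 := fun i hi => by
    have := ht i hi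
    have : i ≠ M := by rintro rfl; exact hMt hi
    omega
  have hM : 2 ≤ M := by
    by_contra hlt
    have h1 : M = 1 := by omega
    subst h1
    have : t = 0 := by
      apply Multiset.eq_zero_of_forall_notMem
      intro i hi
      have := ht' i hi
      have := hs.2.2 i hi
      omega
    subst this
    simp at hs; omega
  rw [downm_cons M t ht, upm_cons _ _ ht', mem_Fm]
  simp only [Multiset.sum_cons, Multiset.mem_cons, forall_eq_or_imp]
  refine ⟨⟨by omega, by omega, hs.2.2⟩, ?_, by congr 1; omega⟩
  intro i hi
  have h := ho i hi
  rw [Multiset.count_cons] at h ⊢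
  split_ifs with h1
  · subst h1
    rcases hu with hu | hu
    · grind
    · have : M - 1 ∉ t := fun h => hu.2.2.2 (Multiset.mem_cons_of_mem h)
      rw [Multiset.count_eq_zero_of_notMem this]
  · split_ifs at h <;> omega

theorem f_ok (n : ℕ) (s : Multiset ℕ) (hs : s ∈ Fm (n+1)) (ho : ODm s)
    (hu : Sm s) : fm s ∈ Fm n ∧ ODm (fm s) ∧ gm (fm s) = s := by
  rw [mem_Fm] at hs
  unfold fm
  split_ifs with h1
  · obtain ⟨t, rfl⟩ := Multiset.exists_cons_of_mem h1
    have h1t : 1 ∉ t := by have := ho 1 odd_one; simpa using this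
    simp only [Multiset.sum_cons, Multiset.mem_cons, forall_eq_or_imp] at hs
    rw [Multiset.erase_cons_head, mem_Fm]
    refine ⟨⟨by omega, hs.2.2⟩, ?_, by simp [gm, h1t]⟩
    intro i hi
    exact (Multiset.count_le_count_cons _ _ _).trans (ho i hi)
  · have h2 : 2 ∈ s := hu.resolve_left h1
    obtain ⟨t, rfl⟩ := Multiset.exists_cons_of_mem h2
    have h1t : 1 ∉ t := fun h => h1 (Multiset.mem_cons_of_mem h)
    simp only [Multiset.sum_cons, Multiset.mem_cons, forall_eq_or_imp] at hs
    rw [Multiset.erase_cons_head, mem_Fm]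
    simp only [Multiset.sum_cons, Multiset.mem_cons, forall_eq_or_imp]
    refine ⟨⟨by omega, by omega, hs.2.2⟩, ?_, by simp [gm]⟩
    intro i hi
    have h := ho i hi
    rw [Multiset.count_cons] at h ⊢
    split_ifs with h3
    · subst h3; rw [Multiset.count_eq_zero_of_notMem h1t]
    · split_ifs at h <;> omega

theorem g_ok (n : ℕ) (s : Multiset ℕ) (hs : s ∈ Fm n) (ho : ODm s) :
    gm s ∈ Fm (n+1) ∧ ODm (gm s) ∧ Sm (gm s) ∧ fm (gm s) = s := by
  rw [mem_Fm] at hs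
  unfold gm
  split_ifs with h1
  · obtain ⟨t, rfl⟩ := Multiset.exists_cons_of_mem h1
    have h1t : 1 ∉ t := by have := ho 1 odd_one; simpa using this
    simp only [Multiset.sum_cons, Multiset.mem_cons, forall_eq_or_imp] at hs
    rw [Multiset.erase_cons_head, mem_Fm]
    simp only [Multiset.sum_cons, Multiset.mem_cons, forall_eq_or_imp]
    refine ⟨⟨by omega, by omega, hs.2.2⟩, ?_, by simp [Sm], by simp [fm, h1t]⟩
    intro i hi
    have h := ho i hi
    rw [Multiset.count_cons] at h ⊢
    split_ifs with h3
    · subst h3; exact absurd hi (by decide)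
    · split_ifs at h <;> omega
  · rw [mem_Fm]
    simp only [Multiset.sum_cons, Multiset.mem_cons, forall_eq_or_imp]
    refine ⟨⟨by omega, by omega, hs.2⟩, ?_, by simp [Sm], by simp [fm]⟩
    intro i hi
    have h := ho i hi
    rw [Multiset.count_cons]
    split_ifs with h3
    · subst h3; rw [Multiset.count_eq_zero_of_notMem h1]
    · omega

open Classical in
theorem card_U (n : ℕ) (hn : 1 ≤ n) :
    ((Fm (n+1)).filter (fun s => ODm s ∧ Um s)).card = ((Fm n).filter ODm).card := by
  apply Finset.card_nbij' downm upm
  · intro s hs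
    simp only [Finset.coe_filter, Set.mem_ofPred_eq] at hs ⊢
    have := down_ok n hn s hs.1 hs.2.1 hs.2.2
    tauto
  · intro s hs
    simp only [Finset.coe_filter, Set.mem_ofPred_eq] at hs ⊢
    have := up_ok n hn s hs.1 hs.2
    tauto
  · intro s hs
    simp only [Finset.coe_filter, Set.mem_ofPred_eq] at hs ⊢
    exact (down_ok n hn s hs.1 hs.2.1 hs.2.2).2.2
  · intro s hs
    simp only [Finset.coe_filter, Set.mem_ofPred_eq] at hs ⊢
    exact (up_ok n hn s hs.1 hs.2).2.2.2

open Classical in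
theorem card_S (n : ℕ) :
    ((Fm (n+1)).filter (fun s => ODm s ∧ Sm s)).card = ((Fm n).filter ODm).card := by
  apply Finset.card_nbij' fm gm
  · intro s hs
    simp only [Finset.coe_filter, Set.mem_ofPred_eq] at hs ⊢
    have := f_ok n s hs.1 hs.2.1 hs.2.2
    tauto
  · intro s hs
    simp only [Finset.coe_filter, Set.mem_ofPred_eq] at hs ⊢
    have := g_ok n s hs.1 hs.2
    tauto
  · intro s hs
    simp only [Finset.coe_filter, Set.mem_ofPred_eq] at hs ⊢
    exact (f_ok n s hs.1 hs.2.1 hs.2.2).2.2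
  · intro s hs
    simp only [Finset.coe_filter, Set.mem_ofPred_eq] at hs ⊢
    exact (g_ok n s hs.1 hs.2).2.2.2

theorem prop_aux (F O S E C D Z : Prop) (hF : F) (hZ : Z) :
    (F ∧ O ∧ S ∧ E ∧ (¬ C ∨ D)) ↔
      ((F ∧ O ∧ S) ∧ ¬ (F ∧ O ∧ (¬ E ∨ (Z ∧ E ∧ C ∧ ¬ D)))) := by
  by_cases O <;> by_cases S <;> by_cases E <;> by_cases C <;> by_cases D <;> simp_all

theorem prop_aux2 (F O S U : Prop) :
    (F ∧ O ∧ ¬ S ∧ U) ↔ ((F ∧ O ∧ U) ∧ ¬ (F ∧ O ∧ S)) := by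
  by_cases F <;> by_cases O <;> by_cases S <;> by_cases U <;> simp_all

theorem card_with_small_eq_card_without_small : ∀ n : ℕ, 3 ≤ n →
    Nat.card {p : n.Partition // OddDistinct p ∧ (1 ∈ p.parts ∨ 2 ∈ p.parts) ∧
      Even (maxPart p) ∧
      (2 ≤ p.parts.count (maxPart p) ∨ maxPart p - 1 ∈ p.parts)} =
    Nat.card {p : n.Partition // OddDistinct p ∧ (∀ i ∈ p.parts, 3 ≤ i) ∧
      (Odd (maxPart p) ∨
        (p.parts ≠ 0 ∧ Even (maxPart p) ∧ p.parts.count (maxPart p) = 1 ∧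
          maxPart p - 1 ∉ p.parts))} := by
  classical
  intro n hn
  have e1 := card_Fm n (fun s => ODm s ∧ (1 ∈ s ∨ 2 ∈ s) ∧ Even s.sup ∧
    (2 ≤ s.count s.sup ∨ s.sup - 1 ∈ s))
  have e2 := card_Fm n (fun s => ODm s ∧ (∀ i ∈ s, 3 ≤ i) ∧ Um s)
  refine e1.trans (Eq.trans ?_ e2.symm)
  obtain ⟨m, rfl⟩ : ∃ m, n = m + 1 := ⟨n - 1, by omega⟩
  have hc := (card_U m (by omega)).trans (card_S m).symm
  have h1 : (Fm (m+1)).filter (fun s => ODm s ∧ (1 ∈ s ∨ 2 ∈ s) ∧ Even s.sup ∧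
      (2 ≤ s.count s.sup ∨ s.sup - 1 ∈ s)) =
      (Fm (m+1)).filter (fun s => ODm s ∧ Sm s) \ (Fm (m+1)).filter (fun s => ODm s ∧ Um s) := by
    ext s
    simp only [Finset.mem_filter, Finset.mem_sdiff]
    by_cases hs : s ∈ Fm (m+1)
    · have h0 : s ≠ 0 := by rintro rfl; simp [mem_Fm] at hs
      have hpos : 1 ≤ s.count s.sup := by
        obtain ⟨M, t, rfl, ht⟩ := exists_top s h0
        rw [sup_cons_of_le _ _ ht]; simp
      have h2 : 2 ≤ s.count s.sup ↔ ¬ s.count s.sup = 1 := by omega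
      unfold Um Sm
      rw [h2, ← Nat.not_even_iff_odd]
      exact prop_aux _ _ _ _ _ _ _ hs h0
    · exact ⟨fun h => absurd h.1 hs, fun h => absurd h.1.1 hs⟩
  have h2 : (Fm (m+1)).filter (fun s => ODm s ∧ (∀ i ∈ s, 3 ≤ i) ∧ Um s) =
      (Fm (m+1)).filter (fun s => ODm s ∧ Um s) \ (Fm (m+1)).filter (fun s => ODm s ∧ Sm s) := by
    ext s
    simp only [Finset.mem_filter, Finset.mem_sdiff]
    by_cases hs : s ∈ Fm (m+1)
    · have h3 : (∀ i ∈ s, 3 ≤ i) ↔ ¬ Sm s := by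
        rw [mem_Fm] at hs
        constructor
        · rintro h (h' | h') <;> have := h _ h' <;> omega
        · intro h i hi
          have := hs.2 i hi
          by_contra hlt
          apply h
          have : i = 1 ∨ i = 2 := by omega
          rcases this with rfl | rfl
          · exact Or.inl hi
          · exact Or.inr hi
      rw [h3]
      exact prop_aux2 _ _ _ _
    · exact ⟨fun h => absurd h.1 hs, fun h => absurd h.1.1 hs⟩
  have h3 := (congrArg Finset.card h1).trans
    ((Finset.card_sdiff_comm hc).symm.trans (congrArg Finset.card h2).symm)
  convert h3 using 2 <;> (ext s; simp only [Finset.mem_filter])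
end

section
/- For every integer n ≥ 1, the number of partitions of n in which no even part is repeated equals the number of 4-regular partitions of n (partitions of n in which no part is divisible by 4). -/
open PowerSeries PowerSeries.WithPiTopology Nat.Partition in
theorem aux_reindex (m k : ℕ) (hm : 0 < m) :
    (∏' i : ℕ, if m ∣ i + 1 then (1 - X ^ ((i + 1) * k) : ℤ⟦X⟧) else 1) =
    ∏' i : ℕ, (1 - X ^ ((i + 1) * (m * k))) := by
  refine tprod_eq_tprod_of_ne_one_bij (fun i ↦ (i.val + 1) * m - 1) ?_ ?_ ?_
  · intro a b h
    have h' : (a.val + 1) * m - 1 = (b.val + 1) * m - 1 := h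
    rw [tsub_left_inj (by nlinarith) (by nlinarith), mul_left_inj' (hm.ne.symm), add_left_inj] at h'
    exact SetCoe.ext h'
  · intro i hi
    have hd : m ∣ i + 1 := by
      by_contra h
      simp [h] at hi
    obtain ⟨j, hj⟩ := hd
    have hj0 : j ≠ 0 := by rintro rfl; simp at hj
    obtain ⟨j, rfl⟩ := Nat.exists_eq_succ_of_ne_zero hj0
    refine ⟨⟨j, ?_⟩, ?_⟩
    · rw [Function.mem_mulSupport]
      intro h
      have h2 : (X ^ ((j + 1) * (m * k)) : ℤ⟦X⟧) = 0 := by linear_combination -h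
      exact pow_ne_zero _ X_ne_zero h2
    · show (j + 1) * m - 1 = i
      rw [mul_comm (j+1) m]
      have : m * (j + 1) = i + 1 := hj.symm
      omega
  · intro i
    have : (i.val + 1) * m - 1 + 1 = (i.val + 1) * m :=
      Nat.sub_add_cancel (Nat.mul_pos (Nat.succ_pos _) hm)
    simp [this, mul_assoc]

open PowerSeries PowerSeries.WithPiTopology Nat.Partition in
theorem aux_restricted :
    (∏' i, if ¬4 ∣ i + 1 then ∑' j, (X : ℤ⟦X⟧) ^ ((i + 1) * j) else 1) * ∏' i, (1 - X ^ (i + 1)) =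
    ∏' i : ℕ, (1 - X ^ ((i + 1) * 4)) := by
  rw [← (multipliable_powerSeriesMk_card_restricted ℤ (¬ 4 ∣ ·)).tprod_mul
    (multipliable_one_sub_X_pow _)]
  have := aux_reindex 4 1 (by norm_num)
  simp only [mul_one] at this
  rw [← this]
  refine tprod_congr fun i ↦ ?_
  by_cases h : 4 ∣ i + 1
  · simp [h]
  · simp only [h, not_false_eq_true, if_true, if_false, pow_mul]
    rw [tsum_pow_mul_one_sub_of_constantCoeff_eq_zero (by simp)]

open PowerSeries PowerSeries.WithPiTopology Nat.Partition in
theorem aux_ped :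
    genFun (fun i c ↦ if Even i → c ≤ 1 then (1 : ℤ) else 0) * ∏' i, (1 - X ^ (i + 1)) =
    ∏' i : ℕ, (1 - X ^ ((i + 1) * 4)) := by
  rw [genFun_eq_tprod, ← (multipliable_genFun (fun i c ↦ if Even i → c ≤ 1 then (1 : ℤ) else 0)).tprod_mul
    (multipliable_one_sub_X_pow ℤ)]
  have := aux_reindex 2 2 (by norm_num)
  norm_num only at this
  rw [← this]
  refine tprod_congr fun i ↦ ?_
  by_cases h : 2 ∣ i + 1
  · have he : Even (i + 1) := even_iff_two_dvd.mpr h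
    rw [tsum_eq_single 0 (by intro b hb; simp only [he, hb, true_imp_iff, add_le_iff_nonpos_left, nonpos_iff_eq_zero, if_false]; exact zero_smul ℤ _)]
    simp only [h, if_true]
    simp
    ring
  · have he : ¬ Even (i + 1) := fun h' => h (even_iff_two_dvd.mp h')
    simp only [h, he, if_false, false_imp_iff, if_true]
    have h1 := tsum_pow_mul_one_sub_of_constantCoeff_eq_zero (f := (X : ℤ⟦X⟧) ^ (i + 1)) (by simp)
    rw [(summable_pow_of_constantCoeff_eq_zero (R := ℤ)
      (f := (X : ℤ⟦X⟧) ^ (i + 1)) (by simp)).tsum_eq_zero_add, pow_zero] at h1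
    refine Eq.trans ?_ h1
    congr 2
    refine tsum_congr fun j ↦ ?_
    rw [← pow_mul]
    exact one_smul ℤ _

open PowerSeries PowerSeries.WithPiTopology Nat.Partition in
theorem ped_eq_fourRegular : ∀ n : ℕ, 1 ≤ n →
    Nat.card {p : n.Partition // EvenDistinct p} =
    Nat.card {p : n.Partition // ∀ i ∈ p.parts, ¬ (4 ∣ i)} := by
  intro n _
  classical
  have key : genFun (fun i c ↦ if Even i → c ≤ 1 then (1 : ℤ) else 0) =
      PowerSeries.mk fun n ↦ ((restricted n (¬ 4 ∣ ·)).card : ℤ) := by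
    apply mul_right_cancel₀ (tprod_one_sub_X_pow_ne_zero ℤ)
    rw [powerSeriesMk_card_restricted_eq_tprod ℤ (¬ 4 ∣ ·), aux_restricted, aux_ped]
  have h := PowerSeries.ext_iff.mp key n
  rw [coeff_genFun, coeff_mk] at h
  simp_rw [Finsupp.prod, Finset.prod_boole] at h
  rw [Finset.sum_boole] at h
  rw [Nat.card_eq_fintype_card, Nat.card_eq_fintype_card, Fintype.card_subtype,
    Fintype.card_subtype]
  have h' := Nat.cast_injective h
  rw [restricted] at h'
  convert h' using 3
  rename_i p _
  constructor
  · intro hp i _ he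
    simpa using hp i he
  · intro hp i he
    by_cases hi : i ∈ p.parts
    · simpa using hp i (by simpa using hi) he
    · simp [Multiset.count_eq_zero_of_notMem hi]
end
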